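/- arXiv:1806.10035 — 2 statements merged into one kernel-verified Lean document; each statement's English description precedes it below -/
import Mathlib

section
/- Let R be a local ring with finitely generated maximal ideal M. Then for each M-primary ideal I of R there is an integer k > 0 such that (the integral closure of I^n)^k ⊆ I^n for every integer n > 0. -/
/-!
Write `M` for the maximal ideal. Since `M ^ N ≤ I ≤ M` for some `N`, it suffices to bound the powers
of `M` (`UnifBound.UB`, `UnifBound.main_of_UB`). The bound descends from a ring whose powers of the
maximal ideal contract correctly, so `R` may be replaced by the completion of the localization of
`R[X]` at `M R[X]` (`UnifBound.exists_complete`). This ring is Noetherian because `M` is finitely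
generated (`UnifBound.isNoetherianRing_of_complete`), and its residue field is infinite. As some
finite product of primes is zero, the bound follows from that for the quotients by primes
(`UnifBound.UB_of_quotients`). So let `R` be a Noetherian local domain in which adic series converge,
with infinite residue field.

Choose a reduction of `M` generated by a family `x` with as few members as possible. Then `x` is
analytically independent: a form of degree `m` in `x` with a unit coefficient has a value outside
`M ^ (m + 1)` (`UnifBound.exists_par`). Such values are called regular here. Let `KF n` consist of all
`z` with `b * z ∈ M ^ (n + m)` for some regular `b` of degree `m`. Two facts are combined.

* There is `c` with `KF (c + j) ≤ M ^ j` for all `j` (`UnifBound.exists_KF_le`). The graded ring of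
  the filtration `KF` is a torsion-free module over the polynomial ring in the `x i` over the residue
  field. The graded ring of the adic filtration is finite over the polynomial ring, maps to it with
  torsion kernel, and grows at least as fast because `M ^ n ≤ KF n`. Comparing growth bounds the
  degrees of denominators of elements over a free submodule, hence gives a common denominator, so the
  graded ring of `KF` is finite as well (`UnifBound.finite_of_growth`). Convergence of adic series
  together with `⋂ KF n = 0` turns this graded statement into the inclusion.

* There is `e` such that products of `e + 1` elements integral over `M ^ n` lie in `KF n`
  (`UnifBound.exists_prod_mem_KF`). Let `𝒪` be the ring of fractions `z / b` with `b` regular of degree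
  `m` and `z ∈ M ^ m`. If `z` is integral over `M ^ n`, then `z / x i ^ n` is integral over `𝒪`. The
  quotient `𝒪 / x i` has finite length `e`, and a length count shows that products of any number of
  the elements `z / x i ^ n` have denominator at most `x i ^ (n * e)`
  (`UnifBound.exists_eq_pow_mul_prod`).

Hence products of `2 * (e + 1)` elements integral over `M ^ n` lie in `M ^ (2 * (n - c)) ≤ M ^ n` if
`n ≥ 2 * c`, and for the finitely many other `n` long products lie in `M ^ n` because the elements
lie in `M`.
-/

/-- The integral closure of an ideal `I` of `R`: the set of `r ∈ R` satisfying an equation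
`r^n + a_1 r^{n-1} + ⋯ + a_{n-1} r + a_n = 0` with `a_k ∈ I^k`.  (This set is an ideal
containing `I`; below we take its span, which therefore has the same elements.) -/
def idealIntegralClosure {R : Type*} [CommRing R] (I : Ideal R) : Set R :=
  {r : R | ∃ n : ℕ, 0 < n ∧ ∃ a : ℕ → R, (∀ k, 1 ≤ k → k ≤ n → a k ∈ I ^ k) ∧
    r ^ n + ∑ k ∈ Finset.Icc 1 n, a k * r ^ (n - k) = 0}

/-! ### Reductions to the powers of the maximal ideal and to domains -/

namespace UnifBound

open IsLocalRing

/-- The uniform bound for the powers of the maximal ideal `M`: products of at least `k` elements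
of the integral closure of `M ^ n` lie in `M ^ n`, with `k` independent of `n`. -/
def UB (R : Type*) [CommRing R] [IsLocalRing R] : Prop :=
  ∃ k : ℕ, ∀ n : ℕ, 0 < n → ∀ l : List R, k ≤ l.length →
    (∀ z ∈ l, z ∈ idealIntegralClosure (maximalIdeal R ^ n)) → l.prod ∈ maximalIdeal R ^ n

lemma closure_map {R S : Type*} [CommRing R] [CommRing S] (f : R →+* S) {I : Ideal R}
    {J : Ideal S} (h : I.map f ≤ J) {z : R} (hz : z ∈ idealIntegralClosure I) :
    f z ∈ idealIntegralClosure J := by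
  obtain ⟨n, hn, a, ha, e⟩ := hz
  refine ⟨n, hn, fun k => f (a k), fun k h1 h2 => ?_, ?_⟩
  · have := Ideal.mem_map_of_mem f (ha k h1 h2)
    rw [Ideal.map_pow] at this
    exact Ideal.pow_right_mono h k this
  · have := congrArg f e
    simpa using this

lemma closure_mono {R : Type*} [CommRing R] {I J : Ideal R} (h : I ≤ J) {z : R}
    (hz : z ∈ idealIntegralClosure I) : z ∈ idealIntegralClosure J :=
  closure_map (RingHom.id R) (by simpa using h) hz

lemma closure_subset_prime {R : Type*} [CommRing R] {I P : Ideal R} [P.IsPrime] (h : I ≤ P) {z : R}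
    (hz : z ∈ idealIntegralClosure I) : z ∈ P := by
  obtain ⟨n, hn, a, ha, e⟩ := hz
  have : z ^ n ∈ P := by
    rw [eq_neg_of_add_eq_zero_left e]
    refine P.neg_mem (P.sum_mem fun k hk => P.mul_mem_right _ ?_)
    rw [Finset.mem_Icc] at hk
    exact h (Ideal.pow_le_self (by omega) (ha k hk.1 hk.2))
  exact Ideal.IsPrime.mem_of_pow_mem inferInstance n this

lemma list_prod_mem_pow {R : Type*} [CommRing R] {J : Ideal R} {k : ℕ} {S : Set R}
    (h : ∀ l : List R, k ≤ l.length → (∀ z ∈ l, z ∈ S) → l.prod ∈ J) (N : ℕ) :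
    ∀ l : List R, N * k ≤ l.length → (∀ z ∈ l, z ∈ S) → l.prod ∈ J ^ N := by
  induction N with
  | zero => intro l _ _; simp
  | succ N ih =>
    intro l hl hz
    rw [← List.prod_take_mul_prod_drop l (N * k), pow_succ]
    rw [add_mul, one_mul] at hl
    exact Ideal.mul_mem_mul
      (ih _ (by simp; omega) fun z hz' => hz z (List.mem_of_mem_take hz'))
      (h _ (by simp; omega) fun z hz' => hz z (List.mem_of_mem_drop hz'))

/-- If `M ^ N ≤ I ≤ M`, then products of `k` elements integral over `I ^ n` lie in `M ^ n`, so
products of `N * k` of them lie in `M ^ (n * N)`, hence in `I ^ n`. -/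
theorem main_of_UB {R : Type*} [CommRing R] [IsLocalRing R]
    (hfg : (maximalIdeal R).FG) (hR : UB R)
    (I : Ideal R) (hIrad : I.radical = maximalIdeal R) :
    ∃ k : ℕ, 0 < k ∧ ∀ n : ℕ, 0 < n →
      (Ideal.span (idealIntegralClosure (I ^ n))) ^ k ≤ I ^ n := by
  obtain ⟨N, hN⟩ := Ideal.exists_pow_le_of_le_radical_of_fg hIrad.ge hfg
  have hIM : I ≤ maximalIdeal R := hIrad ▸ Ideal.le_radical
  obtain ⟨k, hk⟩ := hR
  refine ⟨N * k + 1, by omega, fun n hn => ?_⟩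
  change (Submodule.span R _) ^ _ ≤ _
  rw [Submodule.span_pow, Submodule.span_le]
  intro z hz
  rw [Set.mem_pow] at hz
  obtain ⟨f, rfl⟩ := hz
  have := list_prod_mem_pow (hk n hn) N (List.ofFn fun i => (f i : R)) (by simp) (by
    intro z hz
    obtain ⟨i, rfl⟩ := List.mem_ofFn.1 hz
    exact closure_mono (Ideal.pow_right_mono hIM n) (f i).2)
  rw [← pow_mul, mul_comm, pow_mul] at this
  exact Ideal.pow_right_mono hN n this

/-- The bound descends along a homomorphism under which the powers of the maximal ideal contract to
the corresponding powers. -/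
theorem UB_of_hom {R S : Type*} [CommRing R] [IsLocalRing R] [CommRing S] [IsLocalRing S]
    (f : R →+* S) (h1 : (maximalIdeal R).map f ≤ maximalIdeal S)
    (h2 : ∀ n, (maximalIdeal S ^ n).comap f ≤ maximalIdeal R ^ n) (hS : UB S) : UB R := by
  obtain ⟨k, hk⟩ := hS
  refine ⟨k, fun n hn l hl hz => h2 n ?_⟩
  rw [Ideal.mem_comap, map_list_prod]
  refine hk n hn _ (by simpa using hl) ?_
  intro z hz'
  obtain ⟨w, hw, rfl⟩ := List.mem_map.1 hz'
  refine closure_map f ?_ (hz w hw)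
  rw [Ideal.map_pow]
  exact Ideal.pow_right_mono h1 n

lemma sup_mul_sup_le {R : Type*} [CommRing R] (A B C : Ideal R) :
    (A ⊔ B) * (A ⊔ C) ≤ A ⊔ C * B := by
  refine Ideal.mul_le.2 fun r hr s hs => ?_
  obtain ⟨a, ha, b, hb, rfl⟩ := Submodule.mem_sup.1 hr
  obtain ⟨a', ha', c, hc, rfl⟩ := Submodule.mem_sup.1 hs
  have : (a + b) * (a' + c) = (a * (a' + c) + b * a') + c * b := by ring
  rw [this]
  exact Submodule.add_mem_sup (A.add_mem (A.mul_mem_right _ ha) (A.mul_mem_left _ ha'))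
    (Ideal.mul_mem_mul hc hb)

/-- Reduction to domains: some finite product of primes is zero, and multiplying products that lie in
`M ^ n ⊔ P` and in `M ^ n ⊔ J` gives one in `M ^ n ⊔ J * P`. -/
theorem UB_of_quotients {R : Type*} [CommRing R] [IsLocalRing R] [IsNoetherianRing R]
    (h : ∀ (P : Ideal R) [P.IsPrime] [IsLocalRing (R ⧸ P)], UB (R ⧸ P)) : UB R := by
  obtain ⟨Z, hZ⟩ := PrimeSpectrum.exists_primeSpectrum_prod_le (R := R) ⊥
  have key : ∀ Z : Multiset (PrimeSpectrum R), ∃ k : ℕ, ∀ n : ℕ, 0 < n → ∀ l : List R,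
      k ≤ l.length → (∀ z ∈ l, z ∈ idealIntegralClosure (maximalIdeal R ^ n)) →
      l.prod ∈ maximalIdeal R ^ n ⊔ (Z.map PrimeSpectrum.asIdeal).prod := by
    intro Z
    induction Z using Multiset.induction with
    | empty => exact ⟨0, fun n _ l _ _ => by simp⟩
    | cons P Z ih =>
      obtain ⟨k, hk⟩ := ih
      have : IsLocalRing (R ⧸ P.asIdeal) :=
        IsLocalRing.of_surjective' (Ideal.Quotient.mk P.asIdeal) Ideal.Quotient.mk_surjective
      obtain ⟨k', hk'⟩ := h P.asIdeal
      have hmax : (maximalIdeal R).map (Ideal.Quotient.mk P.asIdeal) =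
          maximalIdeal (R ⧸ P.asIdeal) := by
        exact IsLocalRing.map_maximalIdeal_of_surjective _ Ideal.Quotient.mk_surjective
      refine ⟨k + k', fun n hn l hl hz => ?_⟩
      have e1 := hk n hn (l.take k) (by simp; omega) fun z hz' => hz z (List.mem_of_mem_take hz')
      have e2 := hk' n hn ((l.drop k).map (Ideal.Quotient.mk P.asIdeal)) (by simp; omega) (by
        intro z hz'
        obtain ⟨w, hw, rfl⟩ := List.mem_map.1 hz'
        refine closure_map _ ?_ (hz w (List.mem_of_mem_drop hw))
        rw [Ideal.map_pow, hmax])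
      rw [← map_list_prod, ← hmax, ← Ideal.map_pow,
        Ideal.mem_quotient_iff_mem_sup] at e2
      have := Ideal.mul_mem_mul e1 e2
      rw [List.prod_take_mul_prod_drop] at this
      rw [Multiset.map_cons, Multiset.prod_cons]
      exact sup_mul_sup_le _ _ _ this
  obtain ⟨k, hk⟩ := key Z
  refine ⟨k, fun n hn l hl hz => ?_⟩
  have h0 : (Z.map PrimeSpectrum.asIdeal).prod ≤ maximalIdeal R ^ n := hZ.trans bot_le
  exact (sup_le le_rfl h0) (hk n hn l hl hz)

end UnifBound

/-! ### Enlarging the residue field and completing -/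

namespace UnifBound

open IsLocalRing

lemma UB_of_completion {R : Type*} [CommRing R] [IsLocalRing R] (hfg : (maximalIdeal R).FG)
    [IsLocalRing (AdicCompletion (maximalIdeal R) R)]
    (h : UB (AdicCompletion (maximalIdeal R) R)) : UB R := by
  have hmax := AdicCompletion.maximalIdeal_eq_map_of_fg hfg
  refine UB_of_hom (algebraMap R (AdicCompletion (maximalIdeal R) R)) hmax.ge (fun n x hx => ?_) h
  rw [Ideal.mem_comap, hmax, ← Ideal.map_pow, ← Submodule.restrictScalars_mem R,
    ← Ideal.smul_top_eq_map, AdicCompletion.pow_smul_top_eq_ker_eval hfg] at hx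
  have : (algebraMap R (AdicCompletion (maximalIdeal R) R)) x = AdicCompletion.of _ R x := rfl
  rw [this] at hx
  simpa only [smul_eq_mul, AdicCompletion.eval, LinearMap.mem_ker, LinearMap.coe_mk,
    AddHom.coe_mk, AdicCompletion.of_apply, Submodule.mkQ_apply, Ideal.Quotient.mk_eq_mk,
    Ideal.Quotient.eq_zero_iff_mem, Submodule.Quotient.mk_eq_zero, Ideal.mul_top] using hx

/-- Take for `S` the localization of `R[X]` at the prime `M R[X]`; the powers of `X` are distinct in
its residue field, and `M ^ n S` contracts to `M ^ n`. -/
lemma exists_infinite_residueField.{u} {R : Type u} [CommRing R] [IsLocalRing R]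
    (hfg : (maximalIdeal R).FG) :
    ∃ (S : Type u) (_ : CommRing S) (_ : IsLocalRing S), (maximalIdeal S).FG ∧
      Infinite (ResidueField S) ∧ (UB S → UB R) := by
  let Q : Ideal (Polynomial R) := (maximalIdeal R).map Polynomial.C
  have : Q.IsPrime := Ideal.isPrime_map_C_of_isPrime
  let S := Localization.AtPrime Q
  have hmax : Q.map (algebraMap (Polynomial R) S) = maximalIdeal S :=
    Localization.AtPrime.map_eq_maximalIdeal
  refine ⟨S, inferInstance, inferInstance, ?_, ?_, ?_⟩
  · rw [← hmax]
    exact (hfg.map _).map _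
  · let g : ℕ → ResidueField S := fun i => residue S (algebraMap (Polynomial R) S (Polynomial.X ^ i))
    refine Infinite.of_injective g fun i j hij => ?_
    by_contra hne
    have h1 : algebraMap (Polynomial R) S (Polynomial.X ^ i - Polynomial.X ^ j) ∈
        maximalIdeal S := by
      rw [map_sub, ← residue_eq_zero_iff, map_sub, sub_eq_zero]
      exact hij
    rw [IsLocalization.AtPrime.to_map_mem_maximal_iff S Q] at h1
    have := Ideal.mem_map_C_iff.1 h1 i
    rw [Polynomial.coeff_sub, Polynomial.coeff_X_pow, Polynomial.coeff_X_pow, if_pos rfl,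
      if_neg hne, sub_zero] at this
    exact (Ideal.ne_top_iff_one _).1 (Ideal.IsPrime.ne_top inferInstance) this
  · refine UB_of_hom ((algebraMap (Polynomial R) S).comp Polynomial.C) ?_ fun n x hx => ?_
    · rw [← Ideal.map_map]
      exact hmax.le
    · rw [Ideal.mem_comap, ← hmax, ← Ideal.map_pow, RingHom.comp_apply,
        IsLocalization.algebraMap_mem_map_algebraMap_iff Q.primeCompl] at hx
      obtain ⟨g, hg, hx⟩ := hx
      rw [← Ideal.map_pow, Ideal.mem_map_C_iff] at hx
      have hg' : ¬ ∀ i, g.coeff i ∈ maximalIdeal R := fun h => hg (Ideal.mem_map_C_iff.2 h)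
      push Not at hg'
      obtain ⟨i, hi⟩ := hg'
      have := hx i
      rw [Polynomial.coeff_mul_C] at this
      rw [IsLocalRing.notMem_maximalIdeal] at hi
      exact (Ideal.unit_mul_mem_iff_mem _ hi).1 this

/-- Complete the localization of `R[X]` at `M R[X]`. Finite generation of the maximal ideal is what
makes the completion complete, with the expected maximal ideal. -/
theorem exists_complete.{u} {R : Type u} [CommRing R] [IsLocalRing R]
    (hfg : (maximalIdeal R).FG) :
    ∃ (S : Type u) (_ : CommRing S) (_ : IsLocalRing S), (maximalIdeal S).FG ∧
      Infinite (ResidueField S) ∧ IsAdicComplete (maximalIdeal S) S ∧ (UB S → UB R) := by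
  obtain ⟨S, _, _, h1, h2, h3⟩ := exists_infinite_residueField hfg
  have := AdicCompletion.isLocalRing_of_fg h1
  have := AdicCompletion.algebraMap_isLocalHom_of_fg h1
  refine ⟨AdicCompletion (maximalIdeal S) S, inferInstance, inferInstance, ?_, ?_,
    AdicCompletion.isAdicComplete_of_fg h1, fun h => h3 (UB_of_completion h1 h)⟩
  · rw [AdicCompletion.maximalIdeal_eq_map_of_fg h1]
    exact h1.map _
  · exact Infinite.of_injective _ (AdicCompletion.residueField_map_bijective_of_fg h1).1

end UnifBound

/-! ### Noetherianity of complete local rings -/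

namespace UnifBound

open IsLocalRing MvPolynomial

lemma eval_mem_pow {R σ : Type*} [CommRing R] {J : Ideal R} {x : σ → R} (hx : ∀ i, x i ∈ J)
    {n : ℕ} {f : MvPolynomial σ R} (hf : f.IsHomogeneous n) : eval x f ∈ J ^ n := by
  have h1 : Ideal.span (Set.range x) ≤ J := Ideal.span_le.2 (by rintro _ ⟨i, rfl⟩; exact hx i)
  exact Ideal.pow_right_mono h1 n
    ((Ideal.mem_span_pow_iff_exists_isHomogeneous x _).2 ⟨f, hf, rfl⟩)

lemma eval_mem_of_coeff_mem {R σ : Type*} [CommRing R] {I J : Ideal R} {x : σ → R}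
    (hx : ∀ i, x i ∈ J) {n : ℕ} {f : MvPolynomial σ R} (hf : f.IsHomogeneous n)
    (hc : ∀ d, f.coeff d ∈ I) : eval x f ∈ I * J ^ n := by
  rw [f.as_sum, map_sum]
  refine Ideal.sum_mem _ fun d hd => ?_
  have : monomial d (f.coeff d) = C (f.coeff d) * monomial d 1 := by
    rw [C_mul_monomial, mul_one]
  rw [this, map_mul, eval_C]
  refine Ideal.mul_mem_mul (hc d) (eval_mem_pow hx (isHomogeneous_monomial _ ?_))
  by_contra hne
  exact (mem_support_iff.1 hd) (hf.coeff_eq_zero hne)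

lemma homogeneousComponent_mul_right {R σ : Type*} [CommRing R] {f : MvPolynomial σ R} {d : ℕ}
    (hf : f.IsHomogeneous d) (g : MvPolynomial σ R) (n : ℕ) :
    homogeneousComponent n (g * f) =
      if d ≤ n then homogeneousComponent (n - d) g * f else 0 := by
  let := MvPolynomial.gradedAlgebra (σ := σ) (R := R)
  have := DirectSum.coe_decompose_mul_of_right_mem (homogeneousSubmodule σ R) n (a := g) hf
  simp only [← decomposition.decompose'_apply]
  exact this

lemma coeff_mem_of_map_eq_zero {R σ : Type*} [CommRing R] [IsLocalRing R] {f : MvPolynomial σ R}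
    (h : map (residue R) f = 0) (d : σ →₀ ℕ) : f.coeff d ∈ maximalIdeal R := by
  rw [← residue_eq_zero_iff, ← coeff_map, h, coeff_zero]

lemma eval_mem_of_map_eq_zero {R σ : Type*} [CommRing R] [IsLocalRing R] {f : MvPolynomial σ R}
    {x : σ → R} (hx : ∀ i, x i ∈ maximalIdeal R) {n : ℕ} (hf : f.IsHomogeneous n)
    (h : map (residue R) f = 0) : eval x f ∈ maximalIdeal R ^ (n + 1) := by
  rw [pow_succ']
  exact eval_mem_of_coeff_mem hx hf (coeff_mem_of_map_eq_zero h)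

lemma exists_homogeneous_lift {R σ : Type*} [CommRing R] [IsLocalRing R]
    {q : MvPolynomial σ (ResidueField R)} {n : ℕ} (hq : q.IsHomogeneous n) :
    ∃ f : MvPolynomial σ R, f.IsHomogeneous n ∧ map (residue R) f = q := by
  obtain ⟨f, rfl⟩ := map_surjective _ residue_surjective q
  refine ⟨homogeneousComponent n f, homogeneousComponent_isHomogeneous n f, ?_⟩
  rw [← homogeneousComponent_eq_self hq]
  ext d
  simp only [coeff_map, coeff_homogeneousComponent]
  split_ifs <;> simp

/-- A series with `l`-th term in `M ^ l` converges `M`-adically. Limits are not required to be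
unique, so that the property passes to all quotients. -/
def SeriesComplete (R : Type*) [CommRing R] [IsLocalRing R] : Prop :=
  ∀ u : ℕ → R, (∀ l, u l ∈ maximalIdeal R ^ l) →
    ∃ L, ∀ n, L - ∑ l ∈ Finset.range n, u l ∈ maximalIdeal R ^ n

lemma seriesComplete_of_isAdicComplete {R : Type*} [CommRing R] [IsLocalRing R]
    [IsAdicComplete (maximalIdeal R) R] : SeriesComplete R := by
  intro u hu
  obtain ⟨L, hL⟩ := IsPrecomplete.prec' (I := maximalIdeal R) (M := R)
    (fun n => ∑ l ∈ Finset.range n, u l) (by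
      intro m n hmn
      rw [SModEq.sub_mem, smul_eq_mul, Ideal.mul_top, ← neg_sub, Ideal.neg_mem_iff,
        ← Finset.sum_range_add_sum_Ico _ hmn, add_sub_cancel_left]
      refine Ideal.sum_mem _ fun l hl => Ideal.pow_le_pow_right (Finset.mem_Ico.1 hl).1 (hu l))
  refine ⟨L, fun n => ?_⟩
  have := hL n
  rwa [SModEq.sub_mem, smul_eq_mul, Ideal.mul_top, ← neg_sub, Ideal.neg_mem_iff] at this

lemma SeriesComplete.quotient {R : Type*} [CommRing R] [IsLocalRing R] (h : SeriesComplete R)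
    (P : Ideal R) [IsLocalRing (R ⧸ P)] : SeriesComplete (R ⧸ P) := by
  have hmax : (maximalIdeal R).map (Ideal.Quotient.mk P) = maximalIdeal (R ⧸ P) :=
    IsLocalRing.map_maximalIdeal_of_surjective _ Ideal.Quotient.mk_surjective
  intro u hu
  have : ∀ l, ∃ v ∈ maximalIdeal R ^ l, Ideal.Quotient.mk P v = u l := fun l => by
    have := hu l
    rw [← hmax, ← Ideal.map_pow] at this
    exact (Ideal.mem_map_iff_of_surjective _ Ideal.Quotient.mk_surjective).1 this
  choose v hv hvu using this
  obtain ⟨L, hL⟩ := h v hv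
  refine ⟨Ideal.Quotient.mk P L, fun n => ?_⟩
  simp only [← hvu]
  rw [← map_sum, ← map_sub, ← hmax, ← Ideal.map_pow]
  exact Ideal.mem_map_of_mem _ (hL n)

lemma SeriesComplete.shift {R : Type*} [CommRing R] [IsLocalRing R] (h : SeriesComplete R)
    (D : ℕ) (u : ℕ → R) (hu : ∀ l, u l ∈ maximalIdeal R ^ (l - D)) :
    ∃ L, ∀ n, L - ∑ l ∈ Finset.range (D + n), u l ∈ maximalIdeal R ^ n := by
  obtain ⟨L, hL⟩ := h (fun l => u (D + l)) (fun l => by simpa using hu (D + l))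
  refine ⟨∑ l ∈ Finset.range D, u l + L, fun n => ?_⟩
  rw [Finset.sum_range_add, add_sub_add_left_eq_sub]
  exact hL n

/-- The initial forms of the elements of an ideal `A` generate an ideal of a polynomial ring over the
residue field, which is finitely generated; elements of `A` with these initial forms generate `A`, by
successive approximation. -/
theorem isNoetherianRing_of_complete {R : Type*} [CommRing R] [IsLocalRing R]
    (hfg : (maximalIdeal R).FG) [IsAdicComplete (maximalIdeal R) R] : IsNoetherianRing R := by
  obtain ⟨s, hs⟩ := hfg
  let x : s → R := Subtype.val
  have hsx : Ideal.span (Set.range x) = maximalIdeal R := by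
    rw [← hs, Subtype.range_val]
  have hx : ∀ i, x i ∈ maximalIdeal R := fun i => hsx ▸ Ideal.subset_span ⟨i, rfl⟩
  refine ⟨fun A => ?_⟩
  let T : Set (MvPolynomial s (ResidueField R)) := {q | ∃ (d : ℕ) (f : MvPolynomial s R) (a : R),
    f.IsHomogeneous d ∧ map (residue R) f = q ∧ a ∈ A ∧ a - eval x f ∈ maximalIdeal R ^ (d + 1)}
  obtain ⟨t, htT, ht⟩ := (Submodule.fg_span_iff_fg_span_finset_subset T).1
    (IsNoetherian.noetherian (Ideal.span T))
  have hT : ∀ q : t, q.1 ∈ T := fun q => htT q.2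
  choose d f a hf hfq ha haf using hT
  -- an element of `A` of order `n` agrees to order `n + 1` with a combination of the chosen elements
  have step : ∀ (n : ℕ) (w : R), ∃ g : t → R, w ∈ A ⊓ maximalIdeal R ^ n →
      (∀ q, g q ∈ maximalIdeal R ^ (n - d q)) ∧
      w - ∑ q, g q * a q ∈ A ⊓ maximalIdeal R ^ (n + 1) := by
    intro n w
    by_cases hw : w ∈ A ⊓ maximalIdeal R ^ n
    swap
    · exact ⟨0, fun h => absurd h hw⟩
    have hw2 := hw.2
    rw [SetLike.mem_coe, ← hsx, Ideal.mem_span_pow_iff_exists_isHomogeneous] at hw2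
    obtain ⟨F, hF, rfl⟩ := hw2
    have hFT : map (residue R) F ∈ Submodule.span (MvPolynomial s (ResidueField R)) (t : Set _) := by
      rw [← ht]
      exact Submodule.subset_span ⟨n, F, eval x F, hF, rfl, hw.1, by simp⟩
    obtain ⟨c, -, hc⟩ := Submodule.mem_span_finset.1 hFT
    have hlift : ∀ q : t, ∃ h : MvPolynomial s R, h.IsHomogeneous (n - d q) ∧
        map (residue R) h = (if d q ≤ n then homogeneousComponent (n - d q) (c q) else 0) ∧
        (d q ≤ n ∨ h = 0) := fun q => by
      by_cases hq : d q ≤ n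
      · obtain ⟨h, h1, h2⟩ := exists_homogeneous_lift
          (homogeneousComponent_isHomogeneous (n - d q) (c q))
        exact ⟨h, h1, by rw [h2, if_pos hq], Or.inl hq⟩
      · exact ⟨0, isHomogeneous_zero _ _ _, by simp [hq], Or.inr rfl⟩
    choose h hh hhc hh0 using hlift
    refine ⟨fun q => eval x (h q), fun _ => ⟨fun q => eval_mem_pow hx (hh q), ?_, ?_⟩⟩
    · exact A.sub_mem hw.1 (A.sum_mem fun q _ => A.smul_mem _ (ha q))
    have hsplit : eval x F - ∑ q, eval x (h q) * a q = eval x (F - ∑ q, h q * f q) -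
        ∑ q, eval x (h q) * (a q - eval x (f q)) := by
      simp only [map_sub, map_sum, map_mul, mul_sub, Finset.sum_sub_distrib]
      ring
    rw [SetLike.mem_coe, hsplit]
    refine Ideal.sub_mem _ (eval_mem_of_map_eq_zero hx (hF.sub (IsHomogeneous.sum _ _ _ ?_)) ?_)
      (Ideal.sum_mem _ ?_)
    · intro q _
      rcases hh0 q with hq | hq
      · have := (hh q).mul (hf q)
        rwa [Nat.sub_add_cancel hq] at this
      · rw [hq, zero_mul]
        exact isHomogeneous_zero _ _ _
    · rw [map_sub, sub_eq_zero, map_sum, ← homogeneousComponent_eq_self (hF.map (residue R)), ← hc,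
        map_sum, ← Finset.sum_coe_sort]
      refine Finset.sum_congr rfl fun q _ => ?_
      have hq : (q : MvPolynomial s (ResidueField R)).IsHomogeneous (d q) := hfq q ▸ (hf q).map _
      rw [smul_eq_mul, homogeneousComponent_mul_right hq, map_mul, hhc, hfq]
      split_ifs <;> simp
    · intro q _
      rcases hh0 q with hq | hq
      · have := Ideal.mul_mem_mul (eval_mem_pow hx (hh q)) (haf q)
        rwa [← pow_add, ← add_assoc, Nat.sub_add_cancel hq] at this
      · rw [hq, map_zero, zero_mul]
        exact Ideal.zero_mem _
  choose G hG using step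
  classical
  refine ⟨Finset.univ.image a, le_antisymm ?_ ?_⟩
  · rw [Submodule.span_le]
    intro y hy
    simp only [Finset.coe_image, Finset.coe_univ, Set.image_univ, Set.mem_range] at hy
    obtain ⟨q, rfl⟩ := hy
    exact ha q
  intro z hz
  -- `w n` is the remainder of `z` after `n` approximation steps
  let w : ℕ → R := fun n => Nat.rec z (fun n w => w - ∑ q, G n w q * a q) n
  have hw : ∀ n, w n ∈ A ⊓ maximalIdeal R ^ n := by
    intro n
    induction n with
    | zero => simpa [w] using hz
    | succ n ih => exact (hG n (w n) ih).2
  have hsum : ∀ n, z - ∑ q, (∑ l ∈ Finset.range n, G l (w l) q) * a q = w n := by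
    intro n
    induction n with
    | zero => simp [w]
    | succ n ih =>
      have : w (n + 1) = w n - ∑ q, G n (w n) q * a q := rfl
      rw [this]
      simp only [Finset.sum_range_succ, add_mul, Finset.sum_add_distrib]
      rw [← sub_sub, ih]
  have hL := fun q => (seriesComplete_of_isAdicComplete (R := R)).shift (d q)
    (fun l => G l (w l) q) (fun l => (hG l (w l) (hw l)).1 q)
  choose L hL using hL
  have : z = ∑ q, L q * a q := by
    rw [← sub_eq_zero]
    refine IsHausdorff.haus' (I := maximalIdeal R) _ fun n => ?_
    rw [SModEq.zero, smul_eq_mul, Ideal.mul_top]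
    have hd : ∀ q, d q ≤ ∑ q, d q := fun q =>
      Finset.single_le_sum (f := d) (fun _ _ => Nat.zero_le _) (Finset.mem_univ q)
    have e : z - ∑ q, L q * a q = w (∑ q, d q + n) -
        ∑ q, (L q - ∑ l ∈ Finset.range (∑ q, d q + n), G l (w l) q) * a q := by
      rw [← hsum]
      simp only [sub_mul, Finset.sum_sub_distrib]
      ring
    rw [e]
    refine Ideal.sub_mem _ (Ideal.pow_le_pow_right (by omega) (hw _).2)
      (Ideal.sum_mem _ fun q _ => Ideal.mul_mem_right _ _ ?_)
    have h1 := hL q (∑ q, d q + n - d q)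
    have h2 := hd q
    rw [show d q + (∑ q, d q + n - d q) = ∑ q, d q + n by omega] at h1
    exact Ideal.pow_le_pow_right (by omega) h1
  rw [this]
  exact Submodule.sum_mem _ fun q _ => Submodule.smul_mem _ _
    (Submodule.subset_span (by simp))

end UnifBound

/-! ### Minimal reductions of the maximal ideal -/

namespace UnifBound

open IsLocalRing MvPolynomial

section
variable {R σ : Type*} [CommRing R]

lemma eval_eq_multiset (a : σ → R) (f : MvPolynomial σ R) :
    eval a f = ∑ d ∈ f.support, f.coeff d * (d.toMultiset.map a).prod := by
  rw [eval_eq]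
  refine Finset.sum_congr rfl fun d _ => ?_
  rw [Finsupp.toMultiset_map, Finsupp.prod_toMultiset, Finsupp.prod_mapDomain_index (by simp)
    (fun _ _ _ => pow_add _ _ _)]
  rfl

lemma card_toMultiset_of_mem {f : MvPolynomial σ R} {n : ℕ} (hf : f.IsHomogeneous n)
    {d : σ →₀ ℕ} (hd : d ∈ f.support) : Multiset.card d.toMultiset = n := by
  rw [Finsupp.card_toMultiset]
  by_contra hne
  exact (mem_support_iff.1 hd) (hf.coeff_eq_zero hne)

lemma eval_smul_of_homogeneous {f : MvPolynomial σ R} {n : ℕ} (hf : f.IsHomogeneous n)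
    (c : R) (a : σ → R) : eval (fun i => c * a i) f = c ^ n * eval a f := by
  rw [eval_eq_multiset, eval_eq_multiset, Finset.mul_sum]
  refine Finset.sum_congr rfl fun d hd => ?_
  rw [Multiset.prod_map_mul, Multiset.map_const', Multiset.prod_replicate,
    card_toMultiset_of_mem hf hd]
  ring

lemma multiset_prod_sub_mem {A J : Ideal R} {a b : σ → R} (ha : ∀ i, a i ∈ J) (hb : ∀ i, b i ∈ J)
    (hab : ∀ i, a i - b i ∈ A) (t : Multiset σ) :
    (t.map a).prod - (t.map b).prod ∈ A * J ^ (Multiset.card t - 1) := by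
  induction t using Multiset.induction with
  | empty => simp
  | cons i t ih =>
    rw [Multiset.map_cons, Multiset.map_cons, Multiset.prod_cons, Multiset.prod_cons,
      Multiset.card_cons, Nat.add_sub_cancel]
    have e : a i * (t.map a).prod - b i * (t.map b).prod =
      (a i - b i) * (t.map a).prod + b i * ((t.map a).prod - (t.map b).prod) := by ring
    rw [e]
    refine Ideal.add_mem _ (Ideal.mul_mem_mul (hab i) ?_) ?_
    · rw [← Multiset.card_map a t]
      have : ∀ u : Multiset R, (∀ z ∈ u, z ∈ J) → u.prod ∈ J ^ Multiset.card u := by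
        intro u
        induction u using Multiset.induction with
        | empty => simp
        | cons z u ih =>
          intro h
          rw [Multiset.prod_cons, Multiset.card_cons, pow_succ']
          exact Ideal.mul_mem_mul (h z (by simp)) (ih fun y hy => h y (by simp [hy]))
      refine this _ fun z hz => ?_
      obtain ⟨j, _, rfl⟩ := Multiset.mem_map.1 hz
      exact ha j
    · rcases Nat.eq_zero_or_pos (Multiset.card t) with h0 | h0
      · rw [Multiset.card_eq_zero.1 h0]
        simp
      · have := Ideal.mul_mem_mul (hb i) ih
        rwa [mul_left_comm, ← pow_succ', Nat.sub_add_cancel h0] at this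

lemma eval_sub_mem {A J : Ideal R} {a b : σ → R} (ha : ∀ i, a i ∈ J) (hb : ∀ i, b i ∈ J)
    (hab : ∀ i, a i - b i ∈ A) {f : MvPolynomial σ R} {n : ℕ} (hf : f.IsHomogeneous n) :
    eval a f - eval b f ∈ A * J ^ (n - 1) := by
  rw [eval_eq_multiset, eval_eq_multiset, ← Finset.sum_sub_distrib]
  refine Ideal.sum_mem _ fun d hd => ?_
  rw [← mul_sub]
  refine Ideal.mul_mem_left _ _ ?_
  rw [← card_toMultiset_of_mem hf hd]
  exact multiset_prod_sub_mem ha hb hab _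

lemma sup_pow_le (A B J : Ideal R) (hA : A ≤ J) (hB : B ≤ J) (m : ℕ) :
    (A ⊔ B) ^ (m + 1) ≤ A * J ^ m ⊔ B ^ (m + 1) := by
  induction m with
  | zero => simp
  | succ m ih =>
    rw [pow_succ]
    refine (Ideal.mul_mono_left ih).trans ?_
    rw [Ideal.sup_mul]
    refine sup_le ?_ ?_
    · refine le_sup_of_le_left ?_
      rw [mul_assoc, pow_succ]
      exact Ideal.mul_mono_right (Ideal.mul_mono_right (sup_le hA hB))
    · rw [Ideal.mul_sup]
      refine sup_le (le_sup_of_le_left ?_) (le_sup_of_le_right ?_)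
      · rw [mul_comm]
        exact Ideal.mul_mono_right (Ideal.pow_right_mono hB _)
      · rw [← pow_succ]

end

/-- The family `x` generates a reduction of the maximal ideal `M`, and is analytically independent
relative to `M`: the value at `x` of a form of degree `m` that is nonzero modulo `M` never lies in
`M ^ (m + 1)`. -/
structure Par {R σ : Type*} [CommRing R] [IsLocalRing R] (x : σ → R) : Prop where
  /-- the family lies in the maximal ideal -/
  mem : ∀ i, x i ∈ maximalIdeal R
  /-- the family generates a reduction of the maximal ideal -/
  red : ∃ N, maximalIdeal R ^ (N + 1) ≤ Ideal.span (Set.range x) * maximalIdeal R ^ N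
  /-- forms that are nonzero modulo the maximal ideal have values of the expected order -/
  indep : ∀ (m : ℕ) (f : MvPolynomial σ R), f.IsHomogeneous m → map (residue R) f ≠ 0 →
    eval x f ∉ maximalIdeal R ^ (m + 1)

/-- A reduction of `M` with the least number of generators is analytically independent. Given a
relation, the infinite residue field provides a point where the relation does not vanish; projecting
from this point gives a family with one generator fewer, which generates a reduction by Nakayama's
lemma. -/
theorem exists_par {R : Type*} [CommRing R] [IsLocalRing R] [IsNoetherianRing R]
    [Infinite (ResidueField R)] : ∃ s : Finset R, Par (fun i : s => (i : R)) := by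
  classical
  let Q : ℕ → Prop := fun c => ∃ s : Finset R, s.card = c ∧ (∀ y ∈ s, y ∈ maximalIdeal R) ∧
    ∃ N, maximalIdeal R ^ (N + 1) ≤ Ideal.span (s : Set R) * maximalIdeal R ^ N
  have hQ : ∃ c, Q c := by
    obtain ⟨s, hs⟩ := IsNoetherian.noetherian (maximalIdeal R)
    refine ⟨_, s, rfl, fun y hy => hs ▸ Ideal.subset_span hy, 0, ?_⟩
    rw [show Ideal.span (s : Set R) = maximalIdeal R from hs]
    simp
  obtain ⟨s, hsc, hsM, N, hN⟩ := Nat.find_spec hQ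
  have hmem : ∀ i : s, (i : R) ∈ maximalIdeal R := fun i => hsM i i.2
  refine ⟨s, hmem, ⟨N, by simpa using hN⟩, ?_⟩
  intro m f hf hf0 hfm
  obtain ⟨u, hu⟩ : ∃ u : s → ResidueField R, eval u (map (residue R) f) ≠ 0 := by
    by_contra! h
    exact hf0 ((hf.map _).eq_zero_of_forall_eval_eq_zero h)
  obtain ⟨U, hU⟩ : ∃ U : s → R, ∀ i, residue R (U i) = u i :=
    ⟨fun i => (residue_surjective (u i)).choose, fun i => (residue_surjective (u i)).choose_spec⟩
  have hfU : IsUnit (eval U f) := by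
    rw [← residue_ne_zero_iff_isUnit]
    rw [show u = residue R ∘ U from funext fun i => (hU i).symm, eval_map, ← eval₂_comp] at hu
    exact hu
  obtain _ | m := m
  · rw [← totalDegree_zero_iff_isHomogeneous, totalDegree_eq_zero_iff_eq_C] at hf
    rw [hf, eval_C] at hfm hfU
    rw [zero_add, pow_one] at hfm
    exact hfm hfU
  obtain ⟨i₀, hi₀⟩ : ∃ i, u i ≠ 0 := by
    by_contra! h
    have := eval_mem_pow (J := ⊥) (x := u) (by simpa using h) (hf.map (residue R))
    rw [Ideal.bot_pow (by omega)] at this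
    exact hu this
  have hUu : IsUnit (U i₀) := by rwa [← residue_ne_zero_iff_isUnit, hU]
  -- the linear forms vanishing at `U`; the one with index `i₀` is zero
  let x' : s → R := fun i => U i₀ * i - U i * i₀
  have hx'M : ∀ i, x' i ∈ maximalIdeal R := fun i =>
    Ideal.sub_mem _ (Ideal.mul_mem_left _ _ (hmem i)) (Ideal.mul_mem_left _ _ (hmem i₀))
  let s' : Finset R := (Finset.univ.erase i₀).image x'
  have hs'c : s'.card < s.card := by
    refine Finset.card_image_le.trans_lt ?_
    rw [Finset.card_erase_of_mem (Finset.mem_univ _), Finset.card_univ, Fintype.card_coe]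
    have : 0 < s.card := Finset.card_pos.2 ⟨i₀, i₀.2⟩
    omega
  set A : Ideal R := Ideal.span (s' : Set R) with hA
  have hx'A : ∀ i, x' i ∈ A := by
    intro i
    by_cases hi : i = i₀
    · rw [hi]
      simp [x']
    · exact Ideal.subset_span (Finset.mem_coe.2 (Finset.mem_image_of_mem _ (by simp [hi])))
  have hs'M : ∀ y ∈ s', y ∈ maximalIdeal R := by
    intro y hy
    obtain ⟨i, _, rfl⟩ := Finset.mem_image.1 hy
    exact hx'M i
  have hAM : A ≤ maximalIdeal R := Ideal.span_le.2 hs'M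
  -- modulo the `x'`, the relation becomes a unit times a power of `i₀`
  have hx0 : (i₀ : R) ^ (m + 1) ∈ A * maximalIdeal R ^ m ⊔ maximalIdeal R ^ (m + 2) := by
    have h1 := eval_sub_mem (A := A) (J := maximalIdeal R) (a := fun i : s => (i₀ : R) * U i)
      (b := fun i : s => U i₀ * (i : R))
      (fun i => Ideal.mul_mem_right _ _ (hmem i₀)) (fun i => Ideal.mul_mem_left _ _ (hmem i))
      (fun i => by
        rw [← Ideal.neg_mem_iff, neg_sub, mul_comm (i₀ : R)]
        exact hx'A i) hf
    rw [eval_smul_of_homogeneous hf, eval_smul_of_homogeneous hf] at h1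
    have h2 := Submodule.add_mem_sup h1 (Ideal.mul_mem_left _ (U i₀ ^ (m + 1)) hfm)
    rw [sub_add_cancel] at h2
    exact (Ideal.mul_unit_mem_iff_mem _ hfU).1 h2
  have hI : Ideal.span (s : Set R) ≤ A ⊔ Ideal.span {(i₀ : R)} := by
    rw [Ideal.span_le]
    intro y hy
    rw [SetLike.mem_coe, ← Ideal.unit_mul_mem_iff_mem _ hUu]
    have : U i₀ * y = x' ⟨y, hy⟩ + U ⟨y, hy⟩ * i₀ := by simp [x']
    rw [this]
    exact Submodule.add_mem_sup (hx'A _) (Ideal.mul_mem_left _ _ (Ideal.mem_span_singleton_self _))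
  have hpow : ∀ j, maximalIdeal R ^ (N + j) ≤ Ideal.span (s : Set R) ^ j * maximalIdeal R ^ N := by
    intro j
    induction j with
    | zero => simp
    | succ j ih =>
      rw [← add_assoc, pow_succ (maximalIdeal R), pow_succ (Ideal.span (s : Set R))]
      refine (Ideal.mul_mono_left ih).trans ?_
      rw [mul_assoc, mul_assoc, ← pow_succ]
      exact Ideal.mul_mono_right hN
  have hnak : maximalIdeal R ^ (N + m + 1) ≤ A * maximalIdeal R ^ (N + m) := by
    refine Submodule.le_of_le_smul_of_le_jacobson_bot (I := maximalIdeal R)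
      (IsNoetherian.noetherian _) (IsLocalRing.maximalIdeal_le_jacobson _) ?_
    refine (hpow (m + 1)).trans ?_
    have h1 : Ideal.span (s : Set R) ^ (m + 1) ≤
        A * maximalIdeal R ^ m ⊔ maximalIdeal R ^ (m + 2) := by
      refine (Ideal.pow_right_mono hI _).trans ((sup_pow_le _ _ _ hAM ?_ m).trans
        (sup_le le_sup_left ?_))
      · rw [Ideal.span_singleton_le_iff_mem]
        exact hmem i₀
      · rw [Ideal.span_singleton_pow, Ideal.span_singleton_le_iff_mem]
        exact hx0
    refine (Ideal.mul_mono_left h1).trans ?_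
    rw [Ideal.sup_mul, mul_assoc, ← pow_add, ← pow_add, smul_eq_mul, ← pow_succ',
      show m + N = N + m by omega, show m + 2 + N = N + m + 1 + 1 by omega]
  exact Nat.find_min hQ (hsc ▸ hs'c) ⟨s', rfl, hs'M, N + m, hnak⟩

end UnifBound

/-! ### Regular forms and the filtration they define -/

namespace UnifBound

open IsLocalRing MvPolynomial

section
variable {R σ : Type*} [CommRing R] [IsLocalRing R]

/-- `b` is the value at `x` of a form of degree `m` whose reduction to the residue field is
nonzero. -/
def Reg (x : σ → R) (m : ℕ) (b : R) : Prop :=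
  ∃ f : MvPolynomial σ R, f.IsHomogeneous m ∧ map (residue R) f ≠ 0 ∧ eval x f = b

variable {x : σ → R}

lemma Reg.mem (hx : Par x) {m : ℕ} {b : R} (h : Reg x m b) : b ∈ maximalIdeal R ^ m := by
  obtain ⟨f, hf, -, rfl⟩ := h
  exact eval_mem_pow hx.mem hf

lemma Reg.notMem (hx : Par x) {m : ℕ} {b : R} (h : Reg x m b) : b ∉ maximalIdeal R ^ (m + 1) := by
  obtain ⟨f, hf, h0, rfl⟩ := h
  exact hx.indep m f hf h0

lemma Reg.ne_zero (hx : Par x) {m : ℕ} {b : R} (h : Reg x m b) : b ≠ 0 := by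
  rintro rfl
  exact h.notMem hx (zero_mem _)

lemma Reg.mul {m m' : ℕ} {b b' : R} (h : Reg x m b) (h' : Reg x m' b') :
    Reg x (m + m') (b * b') := by
  obtain ⟨f, hf, h0, rfl⟩ := h
  obtain ⟨g, hg, h0', rfl⟩ := h'
  refine ⟨f * g, hf.mul hg, ?_, by simp⟩
  rw [map_mul]
  exact mul_ne_zero h0 h0'

lemma Reg.one : Reg x 0 (1 : R) := ⟨1, isHomogeneous_one _ _, by simp, by simp⟩

lemma Reg.var (i : σ) : Reg x 1 (x i) := ⟨X i, isHomogeneous_X _ _, by simp, by simp⟩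

lemma Reg.pow {m : ℕ} {b : R} (h : Reg x m b) (l : ℕ) : Reg x (m * l) (b ^ l) := by
  induction l with
  | zero => simpa using Reg.one
  | succ l ih => rw [pow_succ, Nat.mul_succ]; exact ih.mul h

/-- A form in the parameters is regular unless its value has larger order. -/
lemma reg_or_mem (hx : Par x) {m : ℕ} {a : R} (ha : a ∈ Ideal.span (Set.range x) ^ m) :
    Reg x m a ∨ a ∈ maximalIdeal R ^ (m + 1) := by
  obtain ⟨f, hf, rfl⟩ := (Ideal.mem_span_pow_iff_exists_isHomogeneous x _).1 ha
  by_cases h : map (residue R) f = 0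
  · exact Or.inr (eval_mem_of_map_eq_zero hx.mem hf h)
  · exact Or.inl ⟨f, hf, h, rfl⟩

lemma Reg.mem_span {m : ℕ} {b : R} (h : Reg x m b) : b ∈ Ideal.span (Set.range x) ^ m := by
  obtain ⟨f, hf, -, rfl⟩ := h
  exact (Ideal.mem_span_pow_iff_exists_isHomogeneous x _).2 ⟨f, hf, rfl⟩

/-- The elements moved into `M ^ (n + m)` by a regular form of some degree `m`. The ideals `KF n` form
a multiplicative filtration containing the powers of `M`, on which regular forms of degree `m` act
with order exactly `m`. -/
def KF (x : σ → R) (hx : Par x) (n : ℕ) : Ideal R where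
  carrier := {z | ∃ m b, Reg x m b ∧ b * z ∈ maximalIdeal R ^ (n + m)}
  zero_mem' := ⟨0, 1, Reg.one, by simp⟩
  add_mem' := by
    rintro y z ⟨m, b, hb, hy⟩ ⟨m', b', hb', hz⟩
    refine ⟨m + m', b * b', hb.mul hb', ?_⟩
    have e : b * b' * (y + z) = b * y * b' + b' * z * b := by ring
    rw [e]
    refine Ideal.add_mem _ ?_ ?_
    · have := Ideal.mul_mem_mul hy (hb'.mem hx)
      rwa [← pow_add, add_assoc] at this
    · have := Ideal.mul_mem_mul hz (hb.mem hx)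
      rwa [← pow_add, add_assoc, add_comm m' m] at this
  smul_mem' := by
    rintro r z ⟨m, b, hb, hz⟩
    refine ⟨m, b, hb, ?_⟩
    have := Ideal.mul_mem_left _ r hz
    rwa [mul_left_comm] at this

lemma pow_le_KF (hx : Par x) (n : ℕ) : maximalIdeal R ^ n ≤ KF x hx n := fun z hz =>
  ⟨0, 1, Reg.one, by simpa using hz⟩

lemma KF_anti (hx : Par x) {n n' : ℕ} (h : n ≤ n') : KF x hx n' ≤ KF x hx n := by
  rintro z ⟨m, b, hb, hz⟩
  exact ⟨m, b, hb, Ideal.pow_le_pow_right (by omega) hz⟩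

lemma KF_mul (hx : Par x) {a a' : ℕ} {z z' : R} (h : z ∈ KF x hx a) (h' : z' ∈ KF x hx a') :
    z * z' ∈ KF x hx (a + a') := by
  obtain ⟨m, b, hb, hz⟩ := h
  obtain ⟨m', b', hb', hz'⟩ := h'
  refine ⟨m + m', b * b', hb.mul hb', ?_⟩
  have := Ideal.mul_mem_mul hz hz'
  rwa [← pow_add, mul_mul_mul_comm, add_add_add_comm] at this

lemma KF_of_reg_mul (hx : Par x) {n m : ℕ} {b z : R} (hb : Reg x m b)
    (h : b * z ∈ KF x hx (n + m)) : z ∈ KF x hx n := by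
  obtain ⟨m', b', hb', hz⟩ := h
  refine ⟨m + m', b' * b, by rw [add_comm]; exact hb'.mul hb, ?_⟩
  rwa [mul_assoc, ← add_assoc]

/-- A consequence of the Artin–Rees lemma: multiplication by `a ≠ 0` raises orders by a bounded
amount. -/
lemma exists_shift_of_ne_zero [IsNoetherianRing R] [IsDomain R] {a : R} (ha : a ≠ 0) :
    ∃ c, ∀ n β, β * a ∈ maximalIdeal R ^ n → β ∈ maximalIdeal R ^ (n - c) := by
  obtain ⟨c, hc⟩ := (maximalIdeal R).exists_pow_inf_eq_pow_smul (Ideal.span {a} : Ideal R)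
  refine ⟨c, fun n β h => ?_⟩
  rcases Nat.lt_or_ge n c with hlt | hge
  · simp [Nat.sub_eq_zero_of_le hlt.le]
  have h1 : β * a ∈ maximalIdeal R ^ n • (⊤ : Ideal R) ⊓ Ideal.span {a} :=
    ⟨by simpa using h, Ideal.mem_span_singleton.2 ⟨β, mul_comm _ _⟩⟩
  rw [hc n hge] at h1
  have h2 : β * a ∈ maximalIdeal R ^ (n - c) * Ideal.span {a} :=
    Ideal.mul_mono_right inf_le_right h1
  obtain ⟨y, hy, hya⟩ := Ideal.mem_mul_span_singleton.1 h2
  rwa [← mul_right_cancel₀ ha hya]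

/-- If a regular form of degree `m` moves `a ≠ 0` far beyond `M ^ m`, then it has itself order greater
than `m`. -/
lemma KF_separated [IsNoetherianRing R] [IsDomain R] (hx : Par x) {a : R}
    (h : ∀ n, a ∈ KF x hx n) : a = 0 := by
  by_contra ha
  obtain ⟨c, hc⟩ := exists_shift_of_ne_zero ha
  obtain ⟨m, b, hb, hz⟩ := h (c + 1)
  refine hb.notMem hx ?_
  have := hc _ _ hz
  rwa [show c + 1 + m - c = m + 1 by omega] at this

end
end UnifBound

/-! ### Denominators over a unique factorization domain -/

namespace UnifBound

section
variable {B V T : Type*} [CommRing B] [IsDomain B] [UniqueFactorizationMonoid B] [AddCommGroup V]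
  [Module B V]

/-- The free submodule spanned by an independent family is saturated for relatively prime pairs of
multipliers. -/
lemma mem_span_of_isRelPrime [Fintype T] (htf : ∀ (b : B) (v : V), b • v = 0 → b = 0 ∨ v = 0)
    {w : T → V} (hw : LinearIndependent B w) {a b : B} (hab : IsRelPrime a b) (ha : a ≠ 0)
    {u : V} (hau : a • u ∈ Submodule.span B (Set.range w))
    (hbu : b • u ∈ Submodule.span B (Set.range w)) : u ∈ Submodule.span B (Set.range w) := by
  rw [Submodule.mem_span_range_iff_exists_fun] at hau hbu ⊢
  obtain ⟨p, hp⟩ := hau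
  obtain ⟨q, hq⟩ := hbu
  have h1 : ∑ i, (b * p i - a * q i) • w i = 0 := by
    simp only [sub_smul, mul_smul, Finset.sum_sub_distrib, ← Finset.smul_sum, hp, hq]
    rw [smul_comm, sub_self]
  have h2 := Fintype.linearIndependent_iff.1 hw _ h1
  have h3 : ∀ i, ∃ c, p i = a * c := fun i =>
    hab.dvd_of_dvd_mul_left ⟨q i, sub_eq_zero.1 (h2 i)⟩
  choose c hc using h3
  refine ⟨c, ?_⟩
  have h4 : a • (∑ i, c i • w i - u) = 0 := by
    rw [smul_sub, ← hp, Finset.smul_sum, sub_eq_zero]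
    exact Finset.sum_congr rfl fun i _ => by rw [hc, mul_smul]
  exact sub_eq_zero.1 ((htf _ _ h4).resolve_left ha)

variable {S : Submodule B V}

/-- `c` generates the ideal of multipliers carrying `v` into `S`. -/
def IsDen (S : Submodule B V) (v : V) (c : B) : Prop :=
  c ≠ 0 ∧ c • v ∈ S ∧ ∀ b, b • v ∈ S → c ∣ b

/-- Elements with a nonzero multiplier into `S` have a denominator: take a multiplier of least
degree. -/
lemma exists_isDen (deg : B → ℕ) (hmul : ∀ a b, a ≠ 0 → b ≠ 0 → deg (a * b) = deg a + deg b)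
    (hunit : ∀ a, a ≠ 0 → deg a = 0 → IsUnit a)
    (hS : ∀ (a b : B) (u : V), IsRelPrime a b → a ≠ 0 → a • u ∈ S → b • u ∈ S → u ∈ S)
    {v : V} (hv : ∃ b : B, b ≠ 0 ∧ b • v ∈ S) : ∃ c, IsDen S v c := by
  classical
  have hex : ∃ d, ∃ b : B, deg b = d ∧ b ≠ 0 ∧ b • v ∈ S := by
    obtain ⟨b, h⟩ := hv
    exact ⟨_, b, rfl, h⟩
  obtain ⟨c, hcd, hc0, hcv⟩ := Nat.find_spec hex
  refine ⟨c, hc0, hcv, fun b hb => ?_⟩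
  obtain ⟨c', b', g, hrel, rfl, rfl⟩ := UniqueFactorizationMonoid.exists_reduced_factors c hc0 b
  have hc' : c' ≠ 0 := right_ne_zero_of_mul hc0
  have hg : g ≠ 0 := left_ne_zero_of_mul hc0
  have hgv : g • v ∈ S := hS c' b' _ hrel hc' (by rwa [smul_smul, mul_comm])
    (by rwa [smul_smul, mul_comm])
  have hle : deg (g * c') ≤ deg g := by
    rw [hcd]
    exact Nat.find_min' hex ⟨g, rfl, hg, hgv⟩
  rw [hmul _ _ hg hc'] at hle
  exact mul_dvd_mul_left g (hunit c' hc' (by omega)).dvd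

/-- If the denominators of the elements of `V` have bounded degree, then they have a common
multiple. -/
lemma exists_common_den (deg : B → ℕ)
    (hmul : ∀ a b, a ≠ 0 → b ≠ 0 → deg (a * b) = deg a + deg b)
    (hunit : ∀ a, a ≠ 0 → deg a = 0 → IsUnit a)
    (hS : ∀ v : V, ∃ c, IsDen S v c) (D : ℕ) (hD : ∀ v c, IsDen S v c → deg c ≤ D) :
    ∃ g : B, g ≠ 0 ∧ ∀ v, g • v ∈ S := by
  classical
  -- a denominator of maximal degree is divisible by every other one
  obtain ⟨v, c, hvc, hmax⟩ : ∃ v c, IsDen S v c ∧ ∀ v' c', IsDen S v' c' → deg c' ≤ deg c := by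
    let P : ℕ → Prop := fun d => ∃ v c, IsDen S v c ∧ deg c = d
    obtain ⟨c0, h0⟩ := hS 0
    have hP : P (deg c0) := ⟨0, c0, h0, rfl⟩
    obtain ⟨v, c, h, hd⟩ := Nat.findGreatest_spec (hD _ _ h0) hP
    refine ⟨v, c, h, fun v' c' h' => ?_⟩
    rw [hd]
    exact Nat.le_findGreatest (hD _ _ h') ⟨v', c', h', rfl⟩
  refine ⟨c, hvc.1, fun v' => ?_⟩
  obtain ⟨c', hvc'⟩ := hS v'
  suffices h : c' ∣ c by
    obtain ⟨d, rfl⟩ := h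
    rw [mul_comm, mul_smul]
    exact S.smul_mem _ hvc'.2.1
  by_contra hndvd
  obtain ⟨a', b', e, hrel, hea, heb⟩ :=
    UniqueFactorizationMonoid.exists_reduced_factors c' hvc'.1 c
  have he : e ≠ 0 := by rintro rfl; exact hvc.1 (by rw [← heb, zero_mul])
  have hb' : b' ≠ 0 := by rintro rfl; exact hvc.1 (by rw [← heb, mul_zero])
  have ha' : a' ≠ 0 := by rintro rfl; exact hvc'.1 (by rw [← hea, mul_zero])
  have hnu : ¬ IsUnit a' := fun hu => hndvd (by
    rw [← hea, ← heb]
    exact mul_dvd_mul_left e hu.dvd)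
  obtain ⟨ℓ, hirr, a'', rfl⟩ := WfDvdMonoid.exists_irreducible_factor hnu ha'
  have hℓ : Prime ℓ := hirr.prime
  have hℓb : ¬ ℓ ∣ b' := fun h => hirr.not_isUnit (hrel (dvd_mul_right _ _) h)
  obtain ⟨m, e1, he1, rfl⟩ := WfDvdMonoid.max_power_factor he hirr
  have hq1 : ¬ ℓ ∣ e1 * b' := fun h => (hℓ.dvd_or_dvd h).elim he1 hℓb
  have hcop : ∀ j, IsRelPrime (ℓ ^ j) (e1 * b') := fun j =>
    IsRelPrime.pow_left ((hirr.isRelPrime_iff_not_dvd).2 hq1)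
  have he10 : e1 ≠ 0 := right_ne_zero_of_mul he
  -- the least common multiple of the two denominators at `ℓ` is attained by a combination
  set u : V := ℓ ^ m • v + (e1 * a'') • v' with hu
  obtain ⟨cu, hcu⟩ := hS u
  have hc'v : (ℓ ^ (m + 1)) • ((e1 * a'') • v') ∈ S := by
    have := hvc'.2.1
    rw [← hea] at this
    rw [smul_smul]
    convert this using 2
    ring
  have hcv : (e1 * b') • (ℓ ^ m • v) ∈ S := by
    have := hvc.2.1
    rw [← heb] at this
    rw [smul_smul]
    convert this using 2
    ring
  have d1 : e1 * b' ∣ cu := by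
    have h1 : (ℓ ^ (m + 1) * cu) • u - cu • ((ℓ ^ (m + 1)) • ((e1 * a'') • v')) ∈ S :=
      S.sub_mem (by rw [mul_smul]; exact S.smul_mem _ hcu.2.1) (S.smul_mem _ hc'v)
    have h2 : (ℓ ^ (m + 1) * cu) • u - cu • ((ℓ ^ (m + 1)) • ((e1 * a'') • v')) =
        (ℓ ^ (m + 1 + m) * cu) • v := by
      rw [hu]; module
    rw [h2] at h1
    have h3 := hvc.2.2 _ h1
    rw [← heb, mul_assoc] at h3
    exact (hcop _).symm.dvd_of_dvd_mul_left ((dvd_mul_left _ _).trans h3)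
  have d2 : ℓ ^ (m + 1) ∣ cu := by
    have h1 : (e1 * b' * cu) • u - cu • ((e1 * b') • (ℓ ^ m • v)) ∈ S :=
      S.sub_mem (by rw [mul_smul]; exact S.smul_mem _ hcu.2.1) (S.smul_mem _ hcv)
    have h2 : (e1 * b' * cu) • u - cu • ((e1 * b') • (ℓ ^ m • v)) =
        (e1 * b' * cu * (e1 * a'')) • v' := by
      rw [hu]; module
    rw [h2] at h1
    have h3 := hvc'.2.2 _ h1
    rw [← hea, show ℓ ^ m * e1 * (ℓ * a'') = ℓ ^ (m + 1) * (e1 * a'') by ring] at h3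
    have h4 : ℓ ^ (m + 1) ∣ e1 * b' * cu :=
      (mul_dvd_mul_iff_right (mul_ne_zero he10 (right_ne_zero_of_mul ha'))).1 h3
    exact (hcop _).dvd_of_dvd_mul_left h4
  obtain ⟨q, hq⟩ := (hcop (m + 1)).mul_dvd d2 d1
  have hq0 : q ≠ 0 := by rintro rfl; exact hcu.1 (by rw [hq, mul_zero])
  have h5 : cu = c * (ℓ * q) := by rw [hq, ← heb]; ring
  have h6 := hmax _ _ hcu
  rw [h5, hmul _ _ hvc.1 (mul_ne_zero hℓ.ne_zero hq0), hmul _ _ hℓ.ne_zero hq0] at h6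
  exact hirr.not_isUnit (hunit ℓ hℓ.ne_zero (by omega))

end
end UnifBound

/-! ### Counting monomials -/

namespace UnifBound

open MvPolynomial

section
variable (σ : Type*)

/-- The number of monomials of degree `n`. -/
noncomputable def monoCount (n : ℕ) : ℕ := Nat.card {d : σ →₀ ℕ // d.degree = n}

instance [Finite σ] (n : ℕ) : Finite {d : σ →₀ ℕ // d.degree = n} :=
  ((Finsupp.finite_of_degree_le (σ := σ) n).subset fun _ h => (show _ = n from h).le).to_subtype

instance [Finite σ] (n : ℕ) : Finite {d : σ →₀ ℕ // d.degree ≤ n} :=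
  (Finsupp.finite_of_degree_le (σ := σ) n).to_subtype

lemma finrank_restrict (k : Type*) [Field k] (n : ℕ) :
    Module.finrank k (restrictTotalDegree σ k n) = Nat.card {d : σ →₀ ℕ // d.degree ≤ n} :=
  Module.finrank_eq_nat_card_basis (basisRestrictSupport k _)

lemma finrank_restrict_succ [Finite σ] (k : Type*) [Field k] (n : ℕ) :
    Module.finrank k (restrictTotalDegree σ k (n + 1)) =
      Module.finrank k (restrictTotalDegree σ k n) + monoCount σ (n + 1) := by
  rw [finrank_restrict, finrank_restrict, monoCount, ← Nat.card_sum]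
  refine Nat.card_congr ?_
  refine (Equiv.subtypeEquivRight fun d => ?_).trans
    (Equiv.Set.union (s := {d : σ →₀ ℕ | d.degree ≤ n}) (t := {d | d.degree = n + 1}) ?_)
  · exact Nat.le_succ_iff
  · rw [Set.disjoint_left]
    intro d h1 h2
    simp only [Set.mem_ofPred_eq] at h1 h2
    omega

lemma monoCount_mono [Finite σ] [Nonempty σ] : Monotone (monoCount σ) := by
  refine monotone_nat_of_le_succ fun n => ?_
  obtain ⟨i⟩ := ‹Nonempty σ›
  refine Nat.card_le_card_of_injective
    (fun d => ⟨d.1 + Finsupp.single i 1, by simp [d.2]⟩) fun d e h => ?_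
  exact Subtype.ext (add_right_cancel (congrArg Subtype.val h))

lemma monoCount_pos [Finite σ] [Nonempty σ] (n : ℕ) : 0 < monoCount σ n := by
  obtain ⟨i⟩ := ‹Nonempty σ›
  have : Nonempty {d : σ →₀ ℕ // d.degree = n} := ⟨⟨Finsupp.single i n, by simp⟩⟩
  exact Nat.card_pos

lemma monoCount_le [Finite σ] (n : ℕ) : monoCount σ n ≤ (n + 1) ^ Nat.card σ := by
  have := Fintype.ofFinite σ
  have h := Nat.card_le_card_of_injective (α := {d : σ →₀ ℕ // d.degree = n})
    (β := σ → Fin (n + 1))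
    (fun d i => ⟨d.1 i, by have := d.1.le_degree i; have := d.2; omega⟩) (fun d e h => by
      refine Subtype.ext (Finsupp.ext fun i => ?_)
      exact congrArg Fin.val (congrFun h i))
  rwa [Nat.card_fun, Nat.card_eq_fintype_card (α := Fin (n + 1)), Fintype.card_fin] at h

/-- Since the number of monomials grows polynomially, it at most doubles over infinitely many
intervals of length `s`. -/
lemma exists_monoCount_le [Finite σ] [Nonempty σ] (s N : ℕ) :
    ∃ n ≥ N, monoCount σ (n + s) ≤ 2 * monoCount σ n := by
  by_contra! h
  have h1 : ∀ j, 2 ^ j ≤ monoCount σ (N + j * s) := by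
    intro j
    induction j with
    | zero => simpa using Nat.succ_le_of_lt (monoCount_pos σ N)
    | succ j ih =>
      have := h (N + j * s) (by omega)
      rw [show N + (j + 1) * s = N + j * s + s by ring, pow_succ]
      omega
  have h2 : ∀ j, 2 ^ j ≤ (N + j * s + 1) ^ Nat.card σ := fun j => (h1 j).trans (monoCount_le σ _)
  have h3 : ∀ j : ℕ, 1 ≤ j → (2 : ℝ) ^ j ≤ (N + s + 1 : ℝ) ^ Nat.card σ * (j : ℝ) ^ Nat.card σ := by
    intro j hj
    have h4 : N + j * s + 1 ≤ (N + s + 1) * j := by nlinarith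
    have h5 := (h2 j).trans (Nat.pow_le_pow_left h4 _)
    rw [mul_pow] at h5
    exact_mod_cast h5
  have h6 := tendsto_pow_const_div_const_pow_of_one_lt (Nat.card σ) (r := (2 : ℝ)) (by norm_num)
  have hC : (0 : ℝ) < (N + s + 1 : ℝ) ^ Nat.card σ := by positivity
  have h7 := h6.eventually (gt_mem_nhds (inv_pos.2 hC))
  obtain ⟨j, hj1, hj2⟩ := (h7.and (Filter.eventually_ge_atTop 1)).exists
  rw [div_lt_iff₀ (by positivity), ← div_eq_inv_mul, lt_div_iff₀ hC, mul_comm] at hj1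
  exact absurd (h3 j hj2) (not_le.2 hj1)

variable [Finite σ] (k : Type*) [Field k]

lemma finrank_add_le [Nonempty σ] (n j : ℕ) :
    Module.finrank k (restrictTotalDegree σ k (n + j)) ≤
      Module.finrank k (restrictTotalDegree σ k n) + j * monoCount σ (n + j) := by
  induction j with
  | zero => simp
  | succ j ih =>
    rw [← add_assoc, finrank_restrict_succ, add_mul]
    have := Nat.mul_le_mul_left j (monoCount_mono σ (Nat.le_succ (n + j)))
    simp only [Nat.succ_eq_add_one] at this
    omega

lemma le_finrank_add [Nonempty σ] (n j : ℕ) :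
    Module.finrank k (restrictTotalDegree σ k n) + j * monoCount σ n ≤
      Module.finrank k (restrictTotalDegree σ k (n + j)) := by
  induction j with
  | zero => simp
  | succ j ih =>
    rw [← add_assoc, finrank_restrict_succ, add_mul]
    have := monoCount_mono σ (show n ≤ n + j + 1 by omega)
    omega

variable {σ k}

/-- Multiplication by `q` carries polynomials of degree at most `n` isomorphically onto the
multiples of `q` of degree at most `n + deg q`; a complement of these has the expected
dimension. -/
lemma exists_compl {q : MvPolynomial σ k} (hq : q ≠ 0) (n : ℕ) :
    ∃ C : Submodule k (MvPolynomial σ k), C ≤ restrictTotalDegree σ k (n + q.totalDegree) ∧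
      Module.finrank k C + Module.finrank k (restrictTotalDegree σ k n) =
        Module.finrank k (restrictTotalDegree σ k (n + q.totalDegree)) ∧
      (∀ p ∈ C, q ∣ p → p = 0) ∧
      ∀ p ∈ restrictTotalDegree σ k (n + q.totalDegree),
        ∃ p' ∈ restrictTotalDegree σ k n, ∃ c ∈ C, p = q * p' + c := by
  let φ : MvPolynomial σ k →ₗ[k] MvPolynomial σ k := LinearMap.mulLeft k q
  have hφ : Function.Injective φ := fun a b h => mul_left_cancel₀ hq h
  set A := restrictTotalDegree σ k (n + q.totalDegree)
  set Q := (restrictTotalDegree σ k n).map φ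
  have hQA : Q ≤ A := by
    rintro _ ⟨p, hp, rfl⟩
    rw [mem_restrictTotalDegree]
    have hp' := (mem_restrictTotalDegree σ n p).1 hp
    have := totalDegree_mul q p
    change (q * p).totalDegree ≤ _
    omega
  have hdiv : ∀ p ∈ A, q ∣ p → p ∈ Q := by
    rintro _ hp ⟨p', rfl⟩
    refine ⟨p', ?_, rfl⟩
    rcases eq_or_ne p' 0 with rfl | h0
    · exact zero_mem _
    have h1 := (mem_restrictTotalDegree σ _ _).1 hp
    rw [totalDegree_mul_of_isDomain hq h0] at h1
    exact (mem_restrictTotalDegree σ _ _).2 (by omega)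
  obtain ⟨C0, hC0⟩ := Submodule.exists_isCompl Q
  have hinf : Q ⊓ (A ⊓ C0) = ⊥ := by
    rw [← inf_assoc, inf_right_comm, hC0.inf_eq_bot, bot_inf_eq]
  have hsup : Q ⊔ (A ⊓ C0) = A := by
    rw [inf_comm, ← sup_inf_assoc_of_le _ hQA, hC0.sup_eq_top, top_inf_eq]
  refine ⟨A ⊓ C0, inf_le_left, ?_, ?_, ?_⟩
  · have : FiniteDimensional k A := inferInstanceAs (Module.Finite k (restrictTotalDegree σ k _))
    have : FiniteDimensional k Q := Submodule.finiteDimensional_of_le hQA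
    have : FiniteDimensional k ↥(A ⊓ C0) := Submodule.finiteDimensional_of_le inf_le_left
    have h := Submodule.finrank_sup_add_finrank_inf_eq Q (A ⊓ C0)
    rw [hsup, hinf, finrank_bot, add_zero] at h
    have h2 : Module.finrank k Q = Module.finrank k (restrictTotalDegree σ k n) :=
      (Submodule.equivMapOfInjective φ hφ _).symm.finrank_eq
    omega
  · intro p hp hqp
    have : p ∈ Q ⊓ (A ⊓ C0) := ⟨hdiv p hp.1 hqp, hp⟩
    rwa [hinf, Submodule.mem_bot] at this
  · intro p hp
    rw [← hsup] at hp
    obtain ⟨_, ⟨p', hp', rfl⟩, c, hc, rfl⟩ := Submodule.mem_sup.1 hp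
    exact ⟨p', hp', c, hc, rfl⟩

end
end UnifBound

/-! ### A finiteness criterion by growth -/

namespace UnifBound

open MvPolynomial

section
variable {σ k G V ι : Type*} [Field k] [AddCommGroup G] [AddCommGroup V]
  [Module (MvPolynomial σ k) G] [Module (MvPolynomial σ k) V] [Module k G] [Module k V]
  [IsScalarTower k (MvPolynomial σ k) G] [IsScalarTower k (MvPolynomial σ k) V]

local notation "PP" => restrictTotalDegree σ k

/-- `k`-linear combinations of two families with polynomial coefficients from prescribed
subspaces. -/
noncomputable def comb {T T' : Type*} [Fintype T] [Fintype T'] (A C : Submodule k (MvPolynomial σ k))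
    (y : T → G) (y' : T' → G) : ((T → A) × (T' → C)) →ₗ[k] G where
  toFun z := ∑ i, (z.1 i : MvPolynomial σ k) • y i + ∑ j, (z.2 j : MvPolynomial σ k) • y' j
  map_add' z z' := by
    simp only [Prod.fst_add, Prod.snd_add, Pi.add_apply, Submodule.coe_add, add_smul,
      Finset.sum_add_distrib]
    abel
  map_smul' c z := by
    simp only [Prod.smul_fst, Prod.smul_snd, Pi.smul_apply, Submodule.coe_smul, smul_assoc,
      Finset.smul_sum, smul_add, RingHom.id_apply]

/-- Upper bound for the growth of a module generated by the `y i`: asymptotically the rank times the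
growth of the polynomial ring. For `T` indexing a maximal independent set among the images and `β` of
degree `δ` a common multiplier of the `y i` into the span of those in `T`, the coefficients of the
`y i` may be reduced modulo multiples of `β`. -/
lemma exists_upper_bound [Finite σ] [Fintype ι] (θ : G →ₗ[MvPolynomial σ k] V) (y : ι → G)
    (hker : ∀ g, θ g = 0 → ∃ b : MvPolynomial σ k, b ≠ 0 ∧ b • g = 0) :
    ∃ (T : Finset ι) (δ t : ℕ),
      LinearIndependent (MvPolynomial σ k) (fun i : T => θ (y i)) ∧
      ∀ (n : ℕ) (L : Submodule k G),
        (∀ g ∈ L, ∃ p : ι → MvPolynomial σ k, (∀ j, p j ∈ PP (n + δ)) ∧ g = ∑ j, p j • y j) →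
        Module.finrank k L + Fintype.card ι * Module.finrank k (PP n) ≤
          T.card * Module.finrank k (PP (n + δ + t)) +
            Fintype.card ι * Module.finrank k (PP (n + δ)) := by
  classical
  obtain ⟨s, hs, hmax⟩ := exists_maximal_linearIndepOn (MvPolynomial σ k) (fun i => θ (y i))
  set T : Finset ι := s.toFinset with hT
  have hTs : ∀ i, i ∈ T ↔ i ∈ s := fun i => by simp [hT]
  -- every generator is carried into the span of the chosen ones by a nonzero polynomial
  have h1 : ∀ j, ∃ b : MvPolynomial σ k, b ≠ 0 ∧
      b • y j ∈ Submodule.span (MvPolynomial σ k) (Set.range fun i : T => y i) := by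
    intro j
    by_cases hj : j ∈ s
    · exact ⟨1, one_ne_zero, by
        rw [one_smul]
        exact Submodule.subset_span ⟨⟨j, (hTs j).2 hj⟩, rfl⟩⟩
    obtain ⟨b, hb, hbj⟩ := hmax j hj
    have e : (fun i => θ (y i)) '' s = θ '' (Set.range fun i : T => y i) := by
      ext v
      constructor
      · rintro ⟨i, hi, rfl⟩
        exact ⟨y i, ⟨⟨i, (hTs i).2 hi⟩, rfl⟩, rfl⟩
      · rintro ⟨_, ⟨i, rfl⟩, rfl⟩
        exact ⟨i, (hTs i).1 i.2, rfl⟩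
    rw [e, ← Submodule.map_span] at hbj
    obtain ⟨g, hg, hgj⟩ := hbj
    obtain ⟨b', hb', hb'g⟩ := hker (b • y j - g) (by rw [map_sub, map_smul, hgj, sub_self])
    refine ⟨b' * b, mul_ne_zero hb' hb, ?_⟩
    rw [smul_sub, sub_eq_zero] at hb'g
    rw [mul_smul, hb'g]
    exact Submodule.smul_mem _ _ hg
  choose b hb0 hb using h1
  set β := ∏ j, b j with hβ
  have hβ0 : β ≠ 0 := Finset.prod_ne_zero_iff.2 fun j _ => hb0 j
  have h2 : ∀ j, ∃ c : T → MvPolynomial σ k, ∑ i, c i • y i = β • y j := by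
    intro j
    rw [← Submodule.mem_span_range_iff_exists_fun, hβ,
      ← Finset.mul_prod_erase _ _ (Finset.mem_univ j), mul_comm, mul_smul]
    exact Submodule.smul_mem _ _ (hb j)
  choose c hc using h2
  set t := ∑ j, ∑ i, (c j i).totalDegree with ht
  have hct : ∀ j i, (c j i).totalDegree ≤ t := fun j i =>
    (Finset.single_le_sum (f := fun i => (c j i).totalDegree) (fun _ _ => Nat.zero_le _)
      (Finset.mem_univ i)).trans
    (Finset.single_le_sum (f := fun j => ∑ i, (c j i).totalDegree) (fun _ _ => Nat.zero_le _)
      (Finset.mem_univ j))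
  refine ⟨T, β.totalDegree, t, ?_, fun n L hL => ?_⟩
  · have := hs.comp (fun i : T => (⟨i, (hTs i).1 i.2⟩ : s)) fun i j h =>
      Subtype.ext (congrArg (fun z : s => (z : ι)) h)
    exact this
  obtain ⟨C, hC, hCf, -, hCd⟩ := exists_compl hβ0 n
  have : FiniteDimensional k C := Submodule.finiteDimensional_of_le hC
  set Φ := comb (PP (n + β.totalDegree + t)) C (fun i : T => y i) y with hΦ
  have hLΦ : L ≤ LinearMap.range Φ := by
    intro g hg
    obtain ⟨p, hp, rfl⟩ := hL g hg
    refine Submodule.sum_mem _ fun j _ => ?_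
    obtain ⟨p', hp', d, hd, hpd⟩ := hCd (p j) (hp j)
    have hdeg : ∀ i, p' * c j i ∈ PP (n + β.totalDegree + t) := fun i => by
      have h3 := (mem_restrictTotalDegree σ _ _).1 hp'
      have h4 := totalDegree_mul p' (c j i)
      have h5 := hct j i
      exact (mem_restrictTotalDegree σ _ _).2 (by omega)
    refine ⟨(fun i => ⟨p' * c j i, hdeg i⟩, Pi.single j ⟨d, hd⟩), ?_⟩
    change ∑ i, (p' * c j i) • y i +
      ∑ j', ((Pi.single j (⟨d, hd⟩ : C) : ι → C) j' : MvPolynomial σ k) • y j' = _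
    have h6 : ∑ j', ((Pi.single j (⟨d, hd⟩ : C) : ι → C) j' : MvPolynomial σ k) • y j' =
        d • y j := by
      rw [Finset.sum_eq_single j]
      · rw [Pi.single_eq_same]
      · intro j' _ hne
        rw [Pi.single_eq_of_ne hne]
        simp
      · simp
    rw [h6, hpd, add_smul, mul_comm β, mul_smul p' β, ← hc j, Finset.smul_sum]
    simp only [mul_smul]
  have h7 : Module.finrank k L ≤ T.card * Module.finrank k (PP (n + β.totalDegree + t)) +
      Fintype.card ι * Module.finrank k C := by
    refine (Submodule.finrank_mono hLΦ).trans ((LinearMap.finrank_range_le Φ).trans ?_)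
    rw [Module.finrank_prod, Module.finrank_pi_fintype, Module.finrank_pi_fintype]
    simp
  have h8 : Fintype.card ι * Module.finrank k C + Fintype.card ι * Module.finrank k (PP n) =
      Fintype.card ι * Module.finrank k (PP (n + β.totalDegree)) := by
    rw [← mul_add, hCf]
  omega

/-- Lower bound for the growth of `V`: besides the polynomial combinations of the independent family
`w`, it contains the multiples of `v` by polynomials in a complement of the multiples of `q`, if `q`
divides all multipliers of `v` into the span of `w`. -/
lemma lower_bound [Finite σ] {T : Type*} [Fintype T] {w : T → V}
    (hw : LinearIndependent (MvPolynomial σ k) w) (FV : ℕ → Submodule k V)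
    (hFV : ∀ (n j : ℕ) (p : MvPolynomial σ k) (v : V), p ∈ PP j → v ∈ FV n → p • v ∈ FV (n + j))
    [∀ n, FiniteDimensional k (FV n)] {t a : ℕ} (hwt : ∀ i, w i ∈ FV t) {v : V} (hv : v ∈ FV a)
    {q : MvPolynomial σ k} (hq0 : q ≠ 0)
    (hq : ∀ b : MvPolynomial σ k, b • v ∈ Submodule.span (MvPolynomial σ k) (Set.range w) → q ∣ b)
    (n : ℕ) :
    Fintype.card T * Module.finrank k (PP (n + q.totalDegree + a)) +
      Module.finrank k (PP (n + q.totalDegree)) ≤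
    Module.finrank k (FV (n + q.totalDegree + a + t)) + Module.finrank k (PP n) := by
  classical
  obtain ⟨C, hC, hCf, hC0, -⟩ := exists_compl hq0 n
  have : FiniteDimensional k C := Submodule.finiteDimensional_of_le hC
  set Φ := comb (PP (n + q.totalDegree + a)) C w (fun _ : Unit => v) with hΦ
  have hmono : ∀ m j, FV m ≤ FV (m + j) := fun m j u hu => by
    have := hFV m j 1 u ((mem_restrictTotalDegree σ _ _).2 (by simp)) hu
    rwa [one_smul] at this
  have hinj : Function.Injective Φ := by
    rw [← LinearMap.ker_eq_bot, LinearMap.ker_eq_bot']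
    rintro ⟨p, c⟩ h
    change ∑ i, (p i : MvPolynomial σ k) • w i + ∑ _j : Unit, (c _ : MvPolynomial σ k) • v = 0 at h
    rw [Finset.univ_unique (α := Unit), Finset.sum_singleton] at h
    replace h : ∑ i, (p i : MvPolynomial σ k) • w i + (c () : MvPolynomial σ k) • v = 0 := h
    have hc : (c () : MvPolynomial σ k) = 0 := by
      refine hC0 _ (c ()).2 (hq _ ?_)
      rw [add_comm] at h
      rw [eq_neg_of_add_eq_zero_left h]
      exact Submodule.neg_mem _ (Submodule.mem_span_range_iff_exists_fun _ |>.2 ⟨_, rfl⟩)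
    rw [hc, zero_smul, add_zero] at h
    have hp := Fintype.linearIndependent_iff.1 hw _ h
    refine Prod.ext ?_ ?_
    · funext i
      exact Subtype.ext (hp i)
    · funext j
      exact Subtype.ext hc
  have hrange : LinearMap.range Φ ≤ FV (n + q.totalDegree + a + t) := by
    rintro _ ⟨⟨p, c⟩, rfl⟩
    refine Submodule.add_mem _ (Submodule.sum_mem _ fun i _ => ?_)
      (Submodule.sum_mem _ fun j _ => ?_)
    · rw [add_comm]
      exact hFV _ _ _ _ (p i).2 (hwt i)
    · have := hFV _ _ _ _ (hC (c j).2) hv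
      rw [add_comm a] at this
      exact hmono _ t this
  have h1 := Submodule.finrank_mono hrange
  rw [LinearMap.finrank_range_of_inj hinj, Module.finrank_prod, Module.finrank_pi_fintype,
    Module.finrank_pi_fintype] at h1
  simp only [Finset.sum_const, Finset.card_univ, smul_eq_mul, Fintype.card_unit, one_mul] at h1
  omega

/-- A torsion-free filtered module whose growth does not exceed that of a finitely generated one
mapping to it with torsion kernel is finitely generated. The two bounds above limit the degrees of
the denominators with respect to a free submodule `S`; hence there is a common denominator `g`, and
multiplication by `g` embeds the module in `S`. -/
theorem finite_of_growth [Finite σ] [Nonempty σ] [Fintype ι] (θ : G →ₗ[MvPolynomial σ k] V)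
    (y : ι → G) (hker : ∀ g, θ g = 0 → ∃ b : MvPolynomial σ k, b ≠ 0 ∧ b • g = 0)
    (FG : ℕ → Submodule k G)
    (hFG : ∀ n, ∀ g ∈ FG n, ∃ p : ι → MvPolynomial σ k, (∀ j, p j ∈ PP n) ∧ g = ∑ j, p j • y j)
    (FV : ℕ → Submodule k V)
    (hFV : ∀ (n j : ℕ) (p : MvPolynomial σ k) (v : V), p ∈ PP j → v ∈ FV n → p • v ∈ FV (n + j))
    (hfin : ∀ n, FiniteDimensional k (FV n))
    (hdim : ∀ n, Module.finrank k (FV n) ≤ Module.finrank k (FG n))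
    (hex : ∀ v, ∃ n, v ∈ FV n)
    (htf : ∀ (b : MvPolynomial σ k) (v : V), b • v = 0 → b = 0 ∨ v = 0) :
    Module.Finite (MvPolynomial σ k) V := by
  classical
  obtain ⟨T, δ, t, hw, hup⟩ := exists_upper_bound θ y hker
  have hmono : ∀ m j, FV m ≤ FV (m + j) := fun m j u hu => by
    have := hFV m j 1 u ((mem_restrictTotalDegree σ _ _).2 (by simp)) hu
    rwa [one_smul] at this
  obtain ⟨t1, ht1⟩ : ∃ t1, ∀ i : T, θ (y i) ∈ FV t1 := by
    choose f hf using fun i : T => hex (θ (y i))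
    refine ⟨∑ i, f i, fun i => ?_⟩
    have hle := Finset.single_le_sum (f := f) (fun _ _ => Nat.zero_le _) (Finset.mem_univ i)
    have := hmono (f i) (∑ i, f i - f i) (hf i)
    rwa [Nat.add_sub_cancel' hle] at this
  set w : T → V := fun i => θ (y i) with hwdef
  set S := Submodule.span (MvPolynomial σ k) (Set.range w) with hS
  set D := 2 * (T.card * (t1 + t) + Fintype.card ι * δ) with hD
  -- compare the bounds at a degree where the monomial count at most doubles over the relevant range
  have key : ∀ (v : V) (q : MvPolynomial σ k), q ≠ 0 →
      (∀ b : MvPolynomial σ k, b • v ∈ S → q ∣ b) → q.totalDegree ≤ D := by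
    intro v q hq0 hq
    obtain ⟨a, ha⟩ := hex v
    obtain ⟨n, hn, hH⟩ := exists_monoCount_le σ (q.totalDegree + a + t1 + t) δ
    have hlow := lower_bound hw FV hFV ht1 ha hq0 hq n
    obtain ⟨n', hn'⟩ : ∃ n', n + q.totalDegree + a + t1 = n' + δ :=
      ⟨n + q.totalDegree + a + t1 - δ, by omega⟩
    have hd := hdim (n + q.totalDegree + a + t1)
    rw [hn'] at hlow hd
    have hu := hup n' (FG (n' + δ)) (hFG _)
    have i1 := le_finrank_add σ k n q.totalDegree
    have i2 := finrank_add_le σ k (n + q.totalDegree + a) (t1 + t)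
    have i3 := finrank_add_le σ k n' δ
    have i4 : monoCount σ (n' + δ) ≤ monoCount σ (n + (q.totalDegree + a + t1 + t)) :=
      monoCount_mono σ (by omega)
    rw [show n + q.totalDegree + a + (t1 + t) = n + (q.totalDegree + a + t1 + t) by ring] at i2
    rw [show n' + δ + t = n + (q.totalDegree + a + t1 + t) by omega] at hu
    rw [Fintype.card_coe] at hlow
    have hp := monoCount_pos σ n
    set H := monoCount σ n
    set H' := monoCount σ (n + (q.totalDegree + a + t1 + t))
    have i5 := Nat.mul_le_mul_left T.card i2
    have i6 := Nat.mul_le_mul_left (Fintype.card ι) (i3.trans (Nat.add_le_add_left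
      (Nat.mul_le_mul_left δ i4) _))
    have i7 : q.totalDegree * H ≤ (T.card * (t1 + t) + Fintype.card ι * δ) * H' := by
      rw [add_mul]
      rw [mul_add] at i5 i6
      rw [mul_assoc, mul_assoc]
      omega
    have i8 : q.totalDegree * H ≤ D * H := by
      refine i7.trans ((Nat.mul_le_mul_left _ hH).trans ?_)
      rw [hD]
      exact le_of_eq (by ring)
    exact Nat.le_of_mul_le_mul_right i8 hp
  have hmul : ∀ a b : MvPolynomial σ k, a ≠ 0 → b ≠ 0 →
      (a * b).totalDegree = a.totalDegree + b.totalDegree :=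
    fun a b ha hb => totalDegree_mul_of_isDomain ha hb
  have hunit : ∀ a : MvPolynomial σ k, a ≠ 0 → a.totalDegree = 0 → IsUnit a := by
    intro a ha h
    rw [totalDegree_eq_zero_iff_eq_C] at h
    rw [h] at ha ⊢
    exact (isUnit_iff_ne_zero.2 fun h0 => ha (by rw [h0, C_0])).map C
  -- otherwise every polynomial would divide all multipliers of `v` into `S`
  have htors : ∀ v : V, ∃ b : MvPolynomial σ k, b ≠ 0 ∧ b • v ∈ S := by
    intro v
    by_contra! hcon
    obtain ⟨i⟩ := ‹Nonempty σ›
    have h1 := key v (X i ^ (D + 1)) (pow_ne_zero _ (X_ne_zero i)) fun b hb => by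
      by_cases hb0 : b = 0
      · rw [hb0]
        exact dvd_zero _
      · exact absurd hb (hcon b hb0)
    rw [totalDegree_X_pow] at h1
    omega
  obtain ⟨g, hg0, hg⟩ := exists_common_den (S := S) totalDegree hmul hunit
    (fun v => exists_isDen totalDegree hmul hunit
      (fun a b u hab ha hau hbu => mem_span_of_isRelPrime htf hw hab ha hau hbu) (htors v))
    D (fun v c hvc => key v c hvc.1 hvc.2.2)
  have hfg : Module.Finite (MvPolynomial σ k) S := Module.Finite.span_of_finite _ (Set.finite_range w)
  refine Module.Finite.of_injective (N := S)
    ((LinearMap.lsmul (MvPolynomial σ k) V g).codRestrict S hg) fun u v h => ?_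
  have h1 : g • u = g • v := congrArg Subtype.val h
  rw [← sub_eq_zero, ← smul_sub] at h1
  exact sub_eq_zero.1 ((htf _ _ h1).resolve_left hg0)

end
end UnifBound

/-! ### Rees rings and associated graded rings of filtrations -/

namespace UnifBound

open IsLocalRing MvPolynomial

/-- A multiplicative filtration of a local ring by ideals, starting at the whole ring and
containing the adic filtration. -/
structure Filt (R : Type*) [CommRing R] [IsLocalRing R] where
  /-- the terms of the filtration -/
  I : ℕ → Ideal R
  anti : ∀ n, I (n + 1) ≤ I n
  mul : ∀ {a b : ℕ} {z w : R}, z ∈ I a → w ∈ I b → z * w ∈ I (a + b)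
  pow_le : ∀ n, maximalIdeal R ^ n ≤ I n

section
variable {R σ : Type*} [CommRing R] [IsLocalRing R]

/-- The adic filtration. -/
def adicFilt (R : Type*) [CommRing R] [IsLocalRing R] : Filt R where
  I n := maximalIdeal R ^ n
  anti n := Ideal.pow_le_pow_right n.le_succ
  mul hz hw := by rw [pow_add]; exact Ideal.mul_mem_mul hz hw
  pow_le _ := le_rfl

/-- The filtration by the ideals `KF x hx n`. -/
def kFilt {x : σ → R} (hx : Par x) : Filt R where
  I n := KF x hx n
  anti n := KF_anti hx n.le_succ
  mul := KF_mul hx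
  pow_le := pow_le_KF hx

namespace Filt
variable (F : Filt R)

lemma mem_zero (z : R) : z ∈ F.I 0 := F.pow_le 0 (by simp)

/-- The Rees ring of a filtration. -/
def rees : Subring (Polynomial R) where
  carrier := {p | ∀ n, p.coeff n ∈ F.I n}
  mul_mem' := by
    intro p q hp hq n
    rw [Polynomial.coeff_mul]
    refine Ideal.sum_mem _ fun ij hij => ?_
    rw [← Finset.HasAntidiagonal.mem_antidiagonal.1 hij]
    exact F.mul (hp _) (hq _)
  one_mem' := by
    intro n
    rw [Polynomial.coeff_one]
    split_ifs with h
    · rw [h]; exact F.mem_zero _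
    · exact zero_mem _
  add_mem' := by
    intro p q hp hq n
    rw [Polynomial.coeff_add]
    exact Ideal.add_mem _ (hp n) (hq n)
  zero_mem' := fun n => by simp
  neg_mem' := by
    intro p hp n
    rw [Polynomial.coeff_neg]
    exact neg_mem (hp n)

/-- The kernel of the map from the Rees ring onto the associated graded ring. -/
def reesIdeal : Ideal F.rees where
  carrier := {p | ∀ n, p.1.coeff n ∈ F.I (n + 1)}
  zero_mem' := fun n => by simp
  add_mem' := by
    intro p q hp hq n
    rw [Subring.coe_add, Polynomial.coeff_add]
    exact Ideal.add_mem _ (hp n) (hq n)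
  smul_mem' := by
    intro p q hq n
    rw [smul_eq_mul, Subring.coe_mul, Polynomial.coeff_mul]
    refine Ideal.sum_mem _ fun ij hij => ?_
    rw [← Finset.HasAntidiagonal.mem_antidiagonal.1 hij, add_assoc]
    exact F.mul (p.2 _) (hq _)

/-- The element `z t^n` of the Rees ring. -/
noncomputable def mono (n : ℕ) (z : R) (hz : z ∈ F.I n) : F.rees :=
  ⟨Polynomial.monomial n z, fun m => by
    rw [Polynomial.coeff_monomial]
    split_ifs with h
    · rw [← h]; exact hz
    · exact zero_mem _⟩

/-- The constants in the Rees ring. -/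
noncomputable def const : R →+* F.rees :=
  Polynomial.C.codRestrict F.rees fun r n => by
    rw [Polynomial.coeff_C]
    split_ifs with h
    · rw [h]; exact F.mem_zero _
    · exact zero_mem _

lemma coe_const (r : R) : (F.const r : Polynomial R) = Polynomial.C r := rfl

/-- The associated graded ring of a filtration, regarded as an algebra over the polynomial ring
on the classes in degree one of the family `x`. -/
def Gr (F : Filt R) (x : σ → R) (_hx : ∀ i, x i ∈ maximalIdeal R) : Type _ := F.rees ⧸ F.reesIdeal

variable (x : σ → R) (hx : ∀ i, x i ∈ maximalIdeal R)

noncomputable instance : CommRing (F.Gr x hx) := inferInstanceAs (CommRing (F.rees ⧸ F.reesIdeal))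

/-- The class in the graded ring of an element of the Rees ring. -/
noncomputable def cls : F.rees →+* F.Gr x hx := Ideal.Quotient.mk F.reesIdeal

lemma cls_surjective : Function.Surjective (F.cls x hx) := Ideal.Quotient.mk_surjective

lemma cls_eq_zero {p : F.rees} : F.cls x hx p = 0 ↔ ∀ n, p.1.coeff n ∈ F.I (n + 1) :=
  Ideal.Quotient.eq_zero_iff_mem

lemma cls_const_eq_zero {r : R} (hr : r ∈ maximalIdeal R) : F.cls x hx (F.const r) = 0 := by
  rw [cls_eq_zero]
  intro n
  rw [coe_const, Polynomial.coeff_C]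
  split_ifs with h
  · rw [h]
    exact F.pow_le 1 (by simpa using hr)
  · exact zero_mem _

/-- Constants from the residue field. -/
noncomputable def resHom : ResidueField R →+* F.Gr x hx :=
  Ideal.Quotient.lift (maximalIdeal R) ((F.cls x hx).comp F.const)
    fun _ hr => F.cls_const_eq_zero x hx hr

noncomputable instance : Algebra (ResidueField R) (F.Gr x hx) := (F.resHom x hx).toAlgebra

lemma var_mem (hx : ∀ i, x i ∈ maximalIdeal R) (i : σ) : x i ∈ F.I 1 := F.pow_le 1 (by simpa using hx i)

/-- The substitution `X_i ↦ x_i t`. -/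
noncomputable def ev : MvPolynomial σ R →+* F.rees :=
  eval₂Hom F.const fun i => F.mono 1 (x i) (F.var_mem x hx i)

noncomputable instance : Algebra (MvPolynomial σ (ResidueField R)) (F.Gr x hx) :=
  (aeval (R := ResidueField R) fun i => F.cls x hx (F.mono 1 (x i) (F.var_mem x hx i))).toRingHom.toAlgebra

instance : IsScalarTower (ResidueField R) (MvPolynomial σ (ResidueField R)) (F.Gr x hx) :=
  IsScalarTower.of_algebraMap_eq fun r => by
    change _ = (aeval (R := ResidueField R) fun i => F.cls x hx (F.mono 1 (x i) _)) (C r)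
    rw [aeval_C]

lemma algebraMap_map (f : MvPolynomial σ R) :
    algebraMap (MvPolynomial σ (ResidueField R)) (F.Gr x hx) (map (residue R) f) =
      F.cls x hx (F.ev x hx f) := by
  have : (algebraMap (MvPolynomial σ (ResidueField R)) (F.Gr x hx)).comp (map (residue R)) =
      (F.cls x hx).comp (F.ev x hx) := by
    refine MvPolynomial.ringHom_ext (fun r => ?_) fun i => ?_
    · rw [RingHom.comp_apply, map_C, RingHom.comp_apply, ev, eval₂Hom_C]
      change (aeval (R := ResidueField R) fun i => F.cls x hx (F.mono 1 (x i) _)) (C _) = _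
      rw [aeval_C]
      rfl
    · rw [RingHom.comp_apply, map_X, RingHom.comp_apply, ev, eval₂Hom_X']
      change (aeval (R := ResidueField R) fun i => F.cls x hx (F.mono 1 (x i) _)) (X _) = _
      rw [aeval_X]
  exact RingHom.congr_fun this f

lemma map_smul_cls (f : MvPolynomial σ R) (p : F.rees) :
    map (residue R) f • F.cls x hx p = F.cls x hx (F.ev x hx f * p) := by
  rw [Algebra.smul_def, algebraMap_map, map_mul]

lemma ev_coeff (f : MvPolynomial σ R) (n : ℕ) :
    (F.ev x hx f).1.coeff n = eval x (homogeneousComponent n f) := by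
  induction f using MvPolynomial.induction_on generalizing n with
  | C r =>
    rw [ev, eval₂Hom_C, coe_const, Polynomial.coeff_C, homogeneousComponent_of_mem
      (n := 0) (isHomogeneous_C _ _)]
    split_ifs <;> simp
  | add f g h1 h2 =>
    rw [map_add, Subring.coe_add, Polynomial.coeff_add, h1, h2, map_add, map_add]
  | mul_X f i h =>
    rw [map_mul, homogeneousComponent_mul_right (isHomogeneous_X _ i), Subring.coe_mul]
    have e : (F.ev x hx (X i)).1 = Polynomial.monomial 1 (x i) := by
      rw [ev, eval₂Hom_X']
      rfl
    rw [e]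
    rcases n with _ | n
    · simp
    · rw [Polynomial.coeff_mul_monomial, h, if_pos (by omega), map_mul, eval_X,
        Nat.add_sub_cancel]

end Filt
end
end UnifBound

/-! ### Lengths of the graded pieces -/

namespace UnifBound

open IsLocalRing MvPolynomial

section
variable {R σ : Type*} [CommRing R] [IsLocalRing R]

namespace Filt
variable (F : Filt R) (x : σ → R) (hx : ∀ i, x i ∈ maximalIdeal R)

noncomputable instance : Algebra R (F.Gr x hx) := ((F.cls x hx).comp F.const).toAlgebra

instance : IsScalarTower R (ResidueField R) (F.Gr x hx) :=
  IsScalarTower.of_algebraMap_eq fun _ => rfl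

lemma smul_cls (r : R) (p : F.rees) : r • F.cls x hx p = F.cls x hx (F.const r * p) := by
  rw [Algebra.smul_def, map_mul]
  rfl

lemma cls_eq_cls {p q : F.rees} :
    F.cls x hx p = F.cls x hx q ↔ ∀ n, p.1.coeff n - q.1.coeff n ∈ F.I (n + 1) := by
  rw [← sub_eq_zero, ← map_sub, cls_eq_zero]
  simp only [AddSubgroupClass.coe_sub, Polynomial.coeff_sub]

/-- The degree `n` component of the associated graded ring, as a subset of `R ⧸ F.I (n + 1)`. -/
noncomputable def comp (n : ℕ) : F.Gr x hx →ₗ[R] R ⧸ F.I (n + 1) :=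
  have key : ∀ p : F.rees, Ideal.Quotient.mk (F.I (n + 1))
      ((Function.surjInv (F.cls_surjective x hx) (F.cls x hx p)).1.coeff n) =
      Ideal.Quotient.mk (F.I (n + 1)) (p.1.coeff n) := fun p => by
    rw [Ideal.Quotient.eq]
    exact (F.cls_eq_cls x hx).1 (Function.surjInv_eq (F.cls_surjective x hx) _) n
  { toFun g := Ideal.Quotient.mk _ ((Function.surjInv (F.cls_surjective x hx) g).1.coeff n)
    map_add' := fun g h => by
      obtain ⟨p, rfl⟩ := F.cls_surjective x hx g
      obtain ⟨q, rfl⟩ := F.cls_surjective x hx h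
      rw [← map_add, key, key, key, Subring.coe_add, Polynomial.coeff_add, map_add]
    map_smul' := fun r g => by
      obtain ⟨p, rfl⟩ := F.cls_surjective x hx g
      rw [smul_cls, key, key, Subring.coe_mul, coe_const, Polynomial.coeff_C_mul, map_mul,
        RingHom.id_apply, Algebra.smul_def]
      rfl }

lemma comp_cls (n : ℕ) (p : F.rees) :
    F.comp x hx n (F.cls x hx p) = Ideal.Quotient.mk (F.I (n + 1)) (p.1.coeff n) := by
  change Ideal.Quotient.mk _ _ = _
  rw [Ideal.Quotient.eq]
  exact (F.cls_eq_cls x hx).1 (Function.surjInv_eq (F.cls_surjective x hx) _) n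

lemma comp_cls_eq_zero {n : ℕ} {p : F.rees} :
    F.comp x hx n (F.cls x hx p) = 0 ↔ p.1.coeff n ∈ F.I (n + 1) := by
  rw [comp_cls, Ideal.Quotient.eq_zero_iff_mem]

/-- The part of the associated graded ring in degrees less than `n`. -/
noncomputable def low (n : ℕ) : Submodule (ResidueField R) (F.Gr x hx) where
  carrier := {g | ∀ i, n ≤ i → F.comp x hx i g = 0}
  zero_mem' := fun i _ => map_zero _
  add_mem' := fun hg hh i hi => by rw [map_add, hg i hi, hh i hi, add_zero]
  smul_mem' := fun c g hg i hi => by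
    obtain ⟨r, rfl⟩ := residue_surjective c
    have : residue R r • g = r • g := (algebraMap_smul (ResidueField R) r g)
    rw [this, map_smul, hg i hi, smul_zero]

/-- The same as `F.low x hx n`, as a module over `R`. -/
noncomputable abbrev lowR (n : ℕ) : Submodule R (F.Gr x hx) :=
  (F.low x hx n).restrictScalars R

lemma low_zero : F.low x hx 0 = ⊥ := by
  rw [eq_bot_iff]
  intro g hg
  obtain ⟨p, rfl⟩ := F.cls_surjective x hx g
  rw [Submodule.mem_bot, cls_eq_zero]
  exact fun n => (F.comp_cls_eq_zero x hx).1 (hg n n.zero_le)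

lemma length_lowR_succ (n : ℕ) : Module.length R (F.lowR x hx (n + 1)) =
    Module.length R (F.lowR x hx n) +
      Module.length R ((F.I n).map (Ideal.Quotient.mk (F.I (n + 1)))) := by
  have hle : F.lowR x hx n ≤ F.lowR x hx (n + 1) := fun g hg i hi => hg i (by omega)
  have hco : ∀ g : F.lowR x hx (n + 1), F.comp x hx n g ∈
      ((F.I n).map (Ideal.Quotient.mk (F.I (n + 1)))).restrictScalars R := fun g => by
    obtain ⟨p, hp⟩ := F.cls_surjective x hx g.1
    rw [← hp, comp_cls]
    exact Ideal.mem_map_of_mem _ (p.2 n)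
  refine Module.length_eq_add_of_exact (Submodule.inclusion hle)
    (((F.comp x hx n).comp (F.lowR x hx (n + 1)).subtype).codRestrict
      (((F.I n).map (Ideal.Quotient.mk (F.I (n + 1)))).restrictScalars R) hco)
    (Submodule.inclusion_injective hle) ?_ ?_
  · rintro ⟨z, hz⟩
    obtain ⟨a, ha, rfl⟩ := (Ideal.mem_map_iff_of_surjective _ Ideal.Quotient.mk_surjective).1 hz
    refine ⟨⟨F.cls x hx (F.mono n a ha), fun i hi => ?_⟩, ?_⟩
    · rw [comp_cls_eq_zero, mono, Polynomial.coeff_monomial, if_neg (by omega)]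
      exact zero_mem _
    · refine Subtype.ext ?_
      change F.comp x hx n (F.cls x hx (F.mono n a ha)) = _
      rw [comp_cls, mono, Polynomial.coeff_monomial, if_pos rfl]
  · intro g
    rw [← Subtype.coe_inj]
    change F.comp x hx n g.1 = 0 ↔ _
    constructor
    · intro h
      refine ⟨⟨g.1, fun i hi => ?_⟩, rfl⟩
      rcases hi.eq_or_lt with rfl | hi
      · exact h
      · exact g.2 i hi
    · rintro ⟨h, rfl⟩
      exact h.2 n le_rfl

lemma length_quotient_succ (n : ℕ) : Module.length R (R ⧸ F.I (n + 1)) =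
      Module.length R ((F.I n).map (Ideal.Quotient.mk (F.I (n + 1)))) +
    Module.length R (R ⧸ F.I n) := by
  refine Module.length_eq_add_of_exact
    (((F.I n).map (Ideal.Quotient.mk (F.I (n + 1)))).restrictScalars R).subtype
    (Ideal.Quotient.factorₐ R (F.anti n)).toLinearMap (Submodule.subtype_injective _)
    (Ideal.Quotient.factor_surjective (F.anti n)) ?_
  intro z
  obtain ⟨a, rfl⟩ := Ideal.Quotient.mk_surjective z
  change Ideal.Quotient.mk (F.I n) a = 0 ↔ _
  rw [Ideal.Quotient.eq_zero_iff_mem]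
  constructor
  · intro h
    exact ⟨⟨_, Ideal.mem_map_of_mem _ h⟩, rfl⟩
  · rintro ⟨⟨b, hb⟩, h⟩
    obtain ⟨c, hc, rfl⟩ := (Ideal.mem_map_iff_of_surjective _ Ideal.Quotient.mk_surjective).1 hb
    have := (F.anti n) (Ideal.Quotient.eq.1 h)
    exact (Submodule.sub_mem_iff_right _ hc).1 this

/-- The filtration of the graded module by degrees has the same lengths as the filtration `F` of
`R`. -/
lemma length_low (n : ℕ) :
    Module.length (ResidueField R) (F.low x hx n) = Module.length R (R ⧸ F.I n) := by
  rw [← Module.length_eq_of_surjective (S := R) residue_surjective]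
  change Module.length R (F.lowR x hx n) = _
  induction n with
  | zero =>
    have h1 : F.I 0 = ⊤ := (Ideal.eq_top_iff_one _).2 (F.mem_zero 1)
    have : Subsingleton (F.lowR x hx 0) := by
      refine ⟨fun a b => Subtype.ext ?_⟩
      have ha := a.2
      have hb := b.2
      rw [Submodule.restrictScalars_mem, low_zero, Submodule.mem_bot] at ha hb
      rw [ha, hb]
    have : Subsingleton (R ⧸ F.I 0) := Ideal.Quotient.subsingleton_iff.2 h1
    rw [Module.length_eq_zero, Module.length_eq_zero]
  | succ n ih => rw [length_lowR_succ, length_quotient_succ, ih, add_comm]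

lemma length_quotient_ne_top [IsNoetherianRing R] (n : ℕ) :
    Module.length R (R ⧸ F.I n) ≠ ⊤ := by
  rw [Module.length_eq_of_surjective (R := R ⧸ F.I n) Ideal.Quotient.mk_surjective]
  by_cases hI : F.I n = ⊤
  · have : Subsingleton (R ⧸ F.I n) := Ideal.Quotient.subsingleton_iff.2 hI
    simp [Module.length_eq_zero]
  have : Nontrivial (R ⧸ F.I n) := Ideal.Quotient.nontrivial_iff.2 hI
  have := IsLocalRing.of_surjective' (Ideal.Quotient.mk (F.I n)) Ideal.Quotient.mk_surjective
  have : IsArtinianRing (R ⧸ F.I n) := by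
    refine (isArtinianRing_iff_isNilpotent_maximalIdeal _).2 ⟨n, ?_⟩
    rw [← IsLocalRing.map_maximalIdeal_of_surjective _ Ideal.Quotient.mk_surjective,
      ← Ideal.map_pow, Ideal.zero_eq_bot, Ideal.map_eq_bot_iff_le_ker, Ideal.mk_ker]
    exact F.pow_le n
  exact Module.length_ne_top

lemma finiteDimensional_low [IsNoetherianRing R] (n : ℕ) :
    FiniteDimensional (ResidueField R) (F.low x hx n) := by
  have h := F.length_quotient_ne_top n
  rw [← F.length_low x hx, Module.length_ne_top_iff, isFiniteLength_iff_isNoetherian_isArtinian] at h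
  obtain ⟨h, -⟩ := h
  infer_instance

/-- A filtration with larger ideals has a graded module of smaller growth. -/
lemma finrank_low_le [IsNoetherianRing R] (G : Filt R) {n : ℕ} (h : G.I n ≤ F.I n) :
    Module.finrank (ResidueField R) (F.low x hx n) ≤
      Module.finrank (ResidueField R) (G.low x hx n) := by
  have := F.finiteDimensional_low x hx n
  have := G.finiteDimensional_low x hx n
  have h1 : Module.length R (R ⧸ F.I n) ≤ Module.length R (R ⧸ G.I n) :=
    Module.length_le_of_surjective (Ideal.Quotient.factorₐ R h).toLinearMap
      (Ideal.Quotient.factor_surjective h)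
  rw [← F.length_low x hx, ← G.length_low x hx, Module.length_eq_finrank,
    Module.length_eq_finrank] at h1
  exact_mod_cast h1

end Filt
end
end UnifBound

/-! ### Torsion, and the comparison of graded rings -/

namespace UnifBound

open IsLocalRing MvPolynomial

section
variable {R σ : Type*} [CommRing R] [IsLocalRing R]

lemma map_homogeneousComponent {A B σ : Type*} [CommSemiring A] [CommSemiring B] (φ : A →+* B)
    (n : ℕ) (f : MvPolynomial σ A) :
    map φ (homogeneousComponent n f) = homogeneousComponent n (map φ f) := by
  ext d
  simp only [coeff_map, coeff_homogeneousComponent]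
  split_ifs <;> simp

namespace Filt
variable (F : Filt R) (x : σ → R) (hx : ∀ i, x i ∈ maximalIdeal R)

lemma eval_mul_mem {f : MvPolynomial σ R} {a c : ℕ} {z : R}
    (hz : z ∈ F.I c)
    (h : homogeneousComponent a (map (residue R) f) = 0 ∨ z ∈ F.I (c + 1)) (hx : ∀ i, x i ∈ maximalIdeal R) :
    eval x (homogeneousComponent a f) * z ∈ F.I (a + c + 1) := by
  have hh := homogeneousComponent_isHomogeneous a f
  rcases h with h | h
  · have h0 : map (residue R) (homogeneousComponent a f) = 0 := by
      rw [← h]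
      ext d
      simp only [coeff_map, coeff_homogeneousComponent]
      split_ifs <;> simp
    have := F.mul (F.pow_le _ (eval_mem_of_map_eq_zero hx hh h0)) hz
    rwa [show a + 1 + c = a + c + 1 by omega] at this
  · rw [add_assoc]
    exact F.mul (F.pow_le _ (eval_mem_pow hx hh)) h

lemma coeff_ev_mul (f : MvPolynomial σ R) (p : F.rees) (n : ℕ) :
    (F.ev x hx f * p).1.coeff n = ∑ ac ∈ Finset.HasAntidiagonal.antidiagonal n,
      eval x (homogeneousComponent ac.1 f) * p.1.coeff ac.2 := by
  rw [Subring.coe_mul, Polynomial.coeff_mul]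
  simp only [ev_coeff]

lemma smul_mem_low {n j : ℕ} {q : MvPolynomial σ (ResidueField R)} {v : F.Gr x hx}
    (hq : q ∈ restrictTotalDegree σ (ResidueField R) j) (hv : v ∈ F.low x hx (n + 1)) :
    q • v ∈ F.low x hx (n + j + 1) := by
  obtain ⟨p, rfl⟩ := F.cls_surjective x hx v
  obtain ⟨f, rfl⟩ := map_surjective _ residue_surjective q
  rw [mem_restrictTotalDegree] at hq
  rw [map_smul_cls]
  intro i hi
  rw [comp_cls_eq_zero, coeff_ev_mul]
  refine Ideal.sum_mem _ fun ac hac => ?_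
  have hac := Finset.HasAntidiagonal.mem_antidiagonal.1 hac
  rw [← hac]
  refine F.eval_mul_mem x (p.2 _) ?_ hx
  rcases Nat.lt_or_ge j ac.1 with h | h
  · exact Or.inl (homogeneousComponent_eq_zero _ _ (by omega))
  · exact Or.inr ((F.comp_cls_eq_zero x hx).1 (hv ac.2 (by omega)))

lemma exists_mem_low (v : F.Gr x hx) : ∃ n, v ∈ F.low x hx (n + 1) := by
  obtain ⟨p, rfl⟩ := F.cls_surjective x hx v
  refine ⟨p.1.natDegree, fun i hi => ?_⟩
  rw [comp_cls_eq_zero, Polynomial.coeff_eq_zero_of_natDegree_lt (by omega)]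
  exact zero_mem _

end Filt

/-- Multiplication by a regular form does not raise the order in the filtration `KF`; apply this to
the lowest nonzero component of `v` and the lowest nonzero form of `b`. -/
lemma kFilt_torsionFree {x : σ → R} (hx : Par x) (b : MvPolynomial σ (ResidueField R))
    (v : (kFilt hx).Gr x hx.mem) (h : b • v = 0) : b = 0 ∨ v = 0 := by
  classical
  by_contra! hbv
  obtain ⟨hb, hv⟩ := hbv
  obtain ⟨p, rfl⟩ := (kFilt hx).cls_surjective x hx.mem v
  obtain ⟨f, rfl⟩ := map_surjective _ residue_surjective b
  have h1 : ∃ m, homogeneousComponent m (map (residue R) f) ≠ 0 := by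
    by_contra! h0
    refine hb ?_
    rw [← sum_homogeneousComponent (map (residue R) f)]
    exact Finset.sum_eq_zero fun i _ => h0 i
  have h2 : ∃ j, p.1.coeff j ∉ (kFilt hx).I (j + 1) := by
    by_contra! h0
    exact hv (((kFilt hx).cls_eq_zero x hx.mem).2 h0)
  set m := Nat.find h1
  set j := Nat.find h2
  rw [Filt.map_smul_cls, Filt.cls_eq_zero] at h
  have h := h (m + j)
  rw [Filt.coeff_ev_mul, ← Finset.add_sum_erase _ _
    (Finset.HasAntidiagonal.mem_antidiagonal.2 (rfl : (m, j).1 + (m, j).2 = m + j))] at h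
  have h3 : ∑ ac ∈ (Finset.HasAntidiagonal.antidiagonal (m + j)).erase (m, j),
      eval x (homogeneousComponent ac.1 f) * p.1.coeff ac.2 ∈ (kFilt hx).I (m + j + 1) := by
    refine Ideal.sum_mem _ fun ac hac => ?_
    obtain ⟨hne, hac⟩ := Finset.mem_erase.1 hac
    have hac := Finset.HasAntidiagonal.mem_antidiagonal.1 hac
    rw [← hac]
    refine (kFilt hx).eval_mul_mem x (p.2 _) ?_ hx.mem
    rcases Nat.lt_trichotomy ac.1 m with hlt | heq | hgt
    · exact Or.inl (not_not.1 (Nat.find_min h1 hlt))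
    · exact absurd (Prod.ext heq (by simp only; omega)) hne
    · exact Or.inr (not_not.1 (Nat.find_min h2 (m := ac.2) (by omega)))
  have h4 : eval x (homogeneousComponent m f) * p.1.coeff j ∈ KF x hx (j + 1 + m) := by
    have := (Ideal.add_mem_iff_left _ h3).1 h
    rwa [show m + j + 1 = j + 1 + m by omega] at this
  refine Nat.find_spec h2 (KF_of_reg_mul hx
    ⟨_, homogeneousComponent_isHomogeneous m f, ?_, rfl⟩ h4)
  rw [map_homogeneousComponent]
  exact Nat.find_spec h1

/-- The map of graded rings induced by the inclusion of the adic filtration. -/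
noncomputable def grHom {x : σ → R} (hx : Par x) :
    (adicFilt R).Gr x hx.mem →+* (kFilt hx).Gr x hx.mem :=
  Ideal.Quotient.lift (adicFilt R).reesIdeal
    (((kFilt hx).cls x hx.mem).comp (Subring.inclusion (S := (adicFilt R).rees)
      (T := (kFilt hx).rees) fun _ hp n => pow_le_KF hx n (hp n)))
    fun _ hp => ((kFilt hx).cls_eq_zero x hx.mem).2 fun n => pow_le_KF hx _ (hp n)

lemma grHom_cls {x : σ → R} (hx : Par x) (p : (adicFilt R).rees) :
    grHom hx ((adicFilt R).cls x hx.mem p) =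
      (kFilt hx).cls x hx.mem ⟨p.1, fun n => pow_le_KF hx n (p.2 n)⟩ := rfl

/-- `grHom`, as a linear map over the polynomial ring. -/
noncomputable def grMap {x : σ → R} (hx : Par x) :
    (adicFilt R).Gr x hx.mem →ₗ[MvPolynomial σ (ResidueField R)] (kFilt hx).Gr x hx.mem :=
  { grHom hx with
    map_smul' := fun q g => by
      obtain ⟨f, rfl⟩ := map_surjective _ residue_surjective q
      change grHom hx (_ • g) = _ • grHom hx g
      rw [Algebra.smul_def, Algebra.smul_def, map_mul, RingHom.id_apply, Filt.algebraMap_map, Filt.algebraMap_map,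
        grHom_cls]
      congr 2
      refine Subtype.ext (Polynomial.ext fun n => ?_)
      rw [Filt.ev_coeff, Filt.ev_coeff] }

/-- The kernel is torsion: a common regular form raises the order of all components of a
representative. -/
lemma grMap_ker {x : σ → R} (hx : Par x) (g : (adicFilt R).Gr x hx.mem) (h : grMap hx g = 0) :
    ∃ b : MvPolynomial σ (ResidueField R), b ≠ 0 ∧ b • g = 0 := by
  obtain ⟨p, rfl⟩ := (adicFilt R).cls_surjective x hx.mem g
  have h0 : ∀ n, p.1.coeff n ∈ KF x hx (n + 1) := ((kFilt hx).cls_eq_zero x hx.mem).1 h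
  -- multiply the regular forms that serve the single coefficients
  have h1 : ∀ D, ∃ m b, Reg x m b ∧ ∀ n < D, b * p.1.coeff n ∈ maximalIdeal R ^ (n + 1 + m) := by
    intro D
    induction D with
    | zero => exact ⟨0, 1, Reg.one, fun n hn => absurd hn (by omega)⟩
    | succ D ih =>
      obtain ⟨m, b, hb, ih⟩ := ih
      obtain ⟨m', b', hb', hD⟩ := h0 D
      refine ⟨m + m', b * b', hb.mul hb', fun n hn => ?_⟩
      rcases Nat.lt_succ_iff_lt_or_eq.1 hn with hlt | rfl
      · have := Ideal.mul_mem_mul (hb'.mem hx) (ih n hlt)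
        rw [← pow_add] at this
        rwa [show b * b' * p.1.coeff n = b' * (b * p.1.coeff n) by ring,
          show n + 1 + (m + m') = m' + (n + 1 + m) by ring]
      · have := Ideal.mul_mem_mul (hb.mem hx) hD
        rw [← pow_add] at this
        rwa [mul_assoc, show n + 1 + (m + m') = m + (n + 1 + m') by ring]
  obtain ⟨m, b, ⟨f, hf, hf0, rfl⟩, hb⟩ := h1 (p.1.natDegree + 1)
  refine ⟨map (residue R) f, hf0, ?_⟩
  rw [Filt.map_smul_cls, Filt.cls_eq_zero]
  intro n
  rw [Filt.coeff_ev_mul]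
  refine Ideal.sum_mem _ fun ac hac => ?_
  have hac := Finset.HasAntidiagonal.mem_antidiagonal.1 hac
  rw [homogeneousComponent_of_mem hf]
  split_ifs with hm
  · rcases Nat.lt_or_ge p.1.natDegree ac.2 with hlt | hge
    · rw [Polynomial.coeff_eq_zero_of_natDegree_lt hlt, mul_zero]
      exact zero_mem _
    · have := hb ac.2 (by omega)
      rwa [show ac.2 + 1 + m = n + 1 by omega] at this
  · rw [map_zero, zero_mul]
    exact zero_mem _

end
end UnifBound

/-! ### Comparison of the filtration with the adic one -/

namespace UnifBound

open IsLocalRing MvPolynomial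

section
variable {R σ : Type*} [CommRing R] [IsLocalRing R]

lemma pow_eq_of_red {x : σ → R} {N : ℕ}
    (hN : maximalIdeal R ^ (N + 1) ≤ Ideal.span (Set.range x) * maximalIdeal R ^ N) (j : ℕ) :
    maximalIdeal R ^ (N + j) ≤ Ideal.span (Set.range x) ^ j * maximalIdeal R ^ N := by
  induction j with
  | zero => simp
  | succ j ih =>
    calc maximalIdeal R ^ (N + (j + 1)) = maximalIdeal R ^ (N + j) * maximalIdeal R := by
          rw [← add_assoc, pow_succ]
      _ ≤ Ideal.span (Set.range x) ^ j * maximalIdeal R ^ N * maximalIdeal R :=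
          Ideal.mul_mono_left ih
      _ = Ideal.span (Set.range x) ^ j * maximalIdeal R ^ (N + 1) := by rw [mul_assoc, ← pow_succ]
      _ ≤ Ideal.span (Set.range x) ^ j * (Ideal.span (Set.range x) * maximalIdeal R ^ N) :=
          Ideal.mul_mono_right hN
      _ = _ := by rw [← mul_assoc, ← pow_succ]

/-- The adic graded ring is generated in bounded degrees over the polynomial ring. -/
lemma exists_generators [IsNoetherianRing R] {x : σ → R} (hx : Par x) :
    ∃ (ι : Type) (_ : Fintype ι) (y : ι → (adicFilt R).Gr x hx.mem),
      ∀ n, ∀ g ∈ (adicFilt R).low x hx.mem (n + 1), ∃ p : ι → MvPolynomial σ (ResidueField R),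
        (∀ j, p j ∈ restrictTotalDegree σ (ResidueField R) n) ∧ g = ∑ j, p j • y j := by
  classical
  obtain ⟨N, hN⟩ := hx.red
  have hgen : ∀ i : ℕ, ∃ (t : ℕ) (s : Fin t → R), Ideal.span (Set.range s) = maximalIdeal R ^ i :=
    fun i => by
      obtain ⟨t, s, hs⟩ := Submodule.fg_iff_exists_fin_generating_family.1
        (IsNoetherian.noetherian (maximalIdeal R ^ i))
      exact ⟨t, s, hs⟩
  choose t s hs using hgen
  have hsm : ∀ i l, s i l ∈ maximalIdeal R ^ i := fun i l => hs i ▸ Ideal.subset_span ⟨l, rfl⟩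
  let y : (Σ i : Fin (N + 1), Fin (t i)) → (adicFilt R).Gr x hx.mem := fun j =>
    (adicFilt R).cls x hx.mem ((adicFilt R).mono j.1 (s j.1 j.2) (hsm _ _))
  refine ⟨_, inferInstance, y, fun n g hg => ?_⟩
  -- homogeneous elements of degree `i` are combinations with coefficients of degree at most `i`
  have hom : ∀ i z (hz : z ∈ maximalIdeal R ^ i),
      ∃ p : (Σ i : Fin (N + 1), Fin (t i)) → MvPolynomial σ (ResidueField R),
        (∀ j, p j ∈ restrictTotalDegree σ (ResidueField R) i) ∧
        (adicFilt R).cls x hx.mem ((adicFilt R).mono i z hz) = ∑ j, p j • y j := by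
    intro i z hz
    obtain ⟨i₀, d, hi₀, rfl, hle⟩ : ∃ i₀ d, i₀ < N + 1 ∧ i = i₀ + d ∧
        maximalIdeal R ^ i ≤ Ideal.span (Set.range x) ^ d * maximalIdeal R ^ i₀ := by
      rcases Nat.lt_or_ge i (N + 1) with h | h
      · exact ⟨i, 0, h, rfl, by simp⟩
      · obtain ⟨d, rfl⟩ := Nat.exists_eq_add_of_le (show N ≤ i by omega)
        exact ⟨N, d, by omega, rfl, pow_eq_of_red hN d⟩
    have hz' := hle hz
    rw [← hs i₀, ← smul_eq_mul, Ideal.span, Submodule.mem_ideal_smul_span_iff_exists_sum] at hz'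
    obtain ⟨a, ha, hsum⟩ := hz'
    rw [Finsupp.sum_fintype _ _ (fun i => by simp)] at hsum
    choose f hf hfa using fun l => (Ideal.mem_span_pow_iff_exists_isHomogeneous x _).1 (ha l)
    refine ⟨fun j => if h : j.1.1 = i₀ then map (residue R) (f (h ▸ j.2)) else 0, fun j => ?_, ?_⟩
    · dsimp only
      split_ifs with h
      · rw [mem_restrictTotalDegree]
        exact ((hf _).map (residue R)).totalDegree_le.trans (by omega)
      · exact zero_mem _
    · rw [Fintype.sum_sigma, Finset.sum_eq_single_of_mem (⟨i₀, hi₀⟩ : Fin (N + 1))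
        (Finset.mem_univ _)]
      · simp only [dite_true]
        simp only [y, Filt.map_smul_cls, ← map_sum]
        rw [Filt.cls_eq_cls]
        intro n
        rw [AddSubmonoidClass.coe_finsetSum, Polynomial.finsetSum_coeff]
        have : ∀ l : Fin (t i₀), ((((adicFilt R).ev x hx.mem) (f l)) * (adicFilt R).mono i₀ (s i₀ l)
            (hsm i₀ l)).1.coeff n = if i₀ + d = n then a l * s i₀ l else 0 := by
          intro l
          rw [Subring.coe_mul]
          simp only [Filt.mono]
          rw [← Polynomial.C_mul_X_pow_eq_monomial, ← mul_assoc, Polynomial.coeff_mul_X_pow',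
            Polynomial.coeff_mul_C, Filt.ev_coeff, homogeneousComponent_of_mem (hf l)]
          split_ifs with h1 h2 h3 h4 h5
          · rw [hfa]
          · omega
          · omega
          · simp
          · omega
          · rfl
        rw [Finset.sum_congr rfl fun l _ => this l]
        simp only [Filt.mono, Polynomial.coeff_monomial]
        split_ifs with h
        · rw [← hsum]
          simp
        · simp
      · intro b _ hb
        have hb' : b.1 ≠ i₀ := fun h => hb (Fin.ext h)
        simp [hb']
  obtain ⟨p, rfl⟩ := (adicFilt R).cls_surjective x hx.mem g
  choose q hq hq' using fun i => hom i (p.1.coeff i) (p.2 i)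
  refine ⟨fun j => ∑ i ∈ Finset.range (n + 1), q i j, fun j => Submodule.sum_mem _ fun i hi => ?_, ?_⟩
  · have := (mem_restrictTotalDegree _ _ _).1 (hq i j)
    exact (mem_restrictTotalDegree _ _ _).2 (this.trans (by simpa [Nat.lt_succ_iff] using hi))
  · simp only [Finset.sum_smul]
    rw [Finset.sum_comm]
    simp only [← hq', ← map_sum]
    rw [Filt.cls_eq_cls]
    intro i
    rw [AddSubmonoidClass.coe_finsetSum, Polynomial.finsetSum_coeff]
    simp only [Filt.mono, Polynomial.coeff_monomial, Finset.sum_ite_eq']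
    split_ifs with h
    · simp
    · rw [sub_zero]
      exact ((adicFilt R).comp_cls_eq_zero x hx.mem).1 (hg i (by simpa using h))

/-- The associated graded ring of `KF` is finite over the polynomial ring, since it grows no faster
than that of the adic filtration. -/
theorem finite_kFilt [IsNoetherianRing R] [Finite σ] [Nonempty σ] {x : σ → R} (hx : Par x) :
    Module.Finite (MvPolynomial σ (ResidueField R)) ((kFilt hx).Gr x hx.mem) := by
  obtain ⟨ι, _, y, hy⟩ := exists_generators hx
  exact finite_of_growth (grMap hx) y (grMap_ker hx) (fun n => (adicFilt R).low x hx.mem (n + 1)) hy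
    (fun n => (kFilt hx).low x hx.mem (n + 1))
    (fun n j p v hp hv => (kFilt hx).smul_mem_low x hx.mem hp hv)
    (fun n => (kFilt hx).finiteDimensional_low x hx.mem _)
    (fun n => (kFilt hx).finrank_low_le x hx.mem (adicFilt R) (pow_le_KF hx _))
    ((kFilt hx).exists_mem_low x hx.mem) (kFilt_torsionFree hx)

/-- The filtration `KF` is eventually stable for the maximal ideal, up to the next term: `c` bounds the
degrees of generators of its graded ring. -/
lemma exists_KF_succ_le [IsNoetherianRing R] [Finite σ] [Nonempty σ] {x : σ → R} (hx : Par x) :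
    ∃ c, ∀ n, c ≤ n → KF x hx (n + 1) ≤ maximalIdeal R * KF x hx n ⊔ KF x hx (n + 2) := by
  classical
  obtain ⟨t, v, hv⟩ := (finite_kFilt hx).exists_fin
  choose q hq using fun l => (kFilt hx).cls_surjective x hx.mem (v l)
  refine ⟨∑ l, (q l).1.natDegree, fun n hn z hz => ?_⟩
  have hz' : (kFilt hx).cls x hx.mem ((kFilt hx).mono (n + 1) z hz) ∈
    Submodule.span (MvPolynomial σ (ResidueField R)) (Set.range v) := hv ▸ Submodule.mem_top
  obtain ⟨b, hb⟩ := (Submodule.mem_span_range_iff_exists_fun _).1 hz'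
  choose f hf using fun l => map_surjective _ residue_surjective (b l)
  simp only [← hf, ← hq, Filt.map_smul_cls, ← map_sum] at hb
  have h1 := ((kFilt hx).cls_eq_cls x hx.mem).1 hb.symm (n + 1)
  rw [AddSubmonoidClass.coe_finsetSum, Polynomial.finsetSum_coeff] at h1
  simp only [Filt.mono, Polynomial.coeff_monomial, if_true] at h1
  have h2 : ∑ l, ((kFilt hx).ev x hx.mem (f l) * q l).1.coeff (n + 1) ∈
      maximalIdeal R * KF x hx n := by
    refine Ideal.sum_mem _ fun l _ => ?_
    rw [Filt.coeff_ev_mul]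
    refine Ideal.sum_mem _ fun ac hac => ?_
    have hac := Finset.HasAntidiagonal.mem_antidiagonal.1 hac
    obtain ⟨a, c⟩ := ac
    simp only at hac ⊢
    rcases Nat.lt_or_ge n c with h | h
    · have hl : (q l).1.natDegree ≤ ∑ l, (q l).1.natDegree :=
        Finset.single_le_sum (f := fun l => (q l).1.natDegree) (fun _ _ => Nat.zero_le _)
          (Finset.mem_univ l)
      rw [Polynomial.coeff_eq_zero_of_natDegree_lt (by omega), mul_zero]
      exact zero_mem _
    · obtain ⟨a, rfl⟩ : ∃ a', a = a' + 1 := ⟨a - 1, by omega⟩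
      have h3 := Ideal.mul_mem_mul (eval_mem_pow hx.mem
        (homogeneousComponent_isHomogeneous (a + 1) (f l))) ((q l).2 c)
      rw [pow_succ', mul_assoc] at h3
      refine Ideal.mul_mono_right (Ideal.mul_le.2 fun r hr s hs => ?_) h3
      have := KF_mul hx (pow_le_KF hx a hr) hs
      rwa [show a + c = n by omega] at this
  rw [show z = _ + (z - _) from (add_sub_cancel _ z).symm]
  exact Submodule.add_mem_sup h2 h1

lemma KF_add_le [IsNoetherianRing R] {x : σ → R} (hx : Par x) {c : ℕ}
    (hc : ∀ n, c ≤ n → KF x hx (n + 1) ≤ maximalIdeal R * KF x hx n ⊔ KF x hx (n + 2)) (j : ℕ) :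
    KF x hx (c + j) ≤ maximalIdeal R ^ j ⊔ KF x hx (c + j + 1) := by
  induction j with
  | zero => simp
  | succ j ih =>
    refine (hc (c + j) (by omega)).trans (sup_le ?_ le_sup_right)
    refine (Ideal.mul_mono_right ih).trans ?_
    rw [Ideal.mul_sup, ← pow_succ']
    refine sup_le_sup_left (Ideal.mul_le.2 fun r hr s hs => ?_) _
    have := KF_mul hx (pow_le_KF hx 1 (by simpa using hr)) hs
    rwa [show 1 + (c + j + 1) = c + (j + 1) + 1 by omega] at this

/-- In a complete local domain the filtration `KF` is linearly equivalent to the adic one: an element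
of `KF (c + j)` is the sum of a convergent series with terms in `M ^ j`, as `KF` is separated. -/
theorem exists_KF_le [IsNoetherianRing R] [IsDomain R] (hR : SeriesComplete R) [Finite σ]
    [Nonempty σ] {x : σ → R} (hx : Par x) :
    ∃ c, ∀ j, KF x hx (c + j) ≤ maximalIdeal R ^ j := by
  obtain ⟨c, hc⟩ := exists_KF_succ_le hx
  refine ⟨c, fun j z hz => ?_⟩
  have step : ∀ i w, w ∈ KF x hx (c + i) →
      ∃ u ∈ maximalIdeal R ^ i, w - u ∈ KF x hx (c + (i + 1)) := fun i w hw => by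
    obtain ⟨u, hu, r, hr, rfl⟩ := Submodule.mem_sup.1 (KF_add_le hx hc i hw)
    exact ⟨u, hu, by rwa [add_sub_cancel_left]⟩
  choose! U hU hU' using step
  -- `w i` is the remainder after subtracting the first `i` corrections
  let w : ℕ → R := fun i => Nat.rec z (fun i w => w - U (j + i) w) i
  have hw : ∀ i, w i ∈ KF x hx (c + (j + i)) := fun i => by
    induction i with
    | zero => exact hz
    | succ i ih => exact hU' (j + i) (w i) ih
  have hw' : ∀ i, z - ∑ l ∈ Finset.range i, U (j + l) (w l) = w i := fun i => by
    induction i with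
    | zero => simp [w]
    | succ i ih =>
      rw [Finset.sum_range_succ, ← sub_sub, ih]
  obtain ⟨L, hL⟩ := hR (fun l => if j ≤ l then U l (w (l - j)) else 0) (fun l => by
    split_ifs with h
    · refine hU l _ ?_
      have := hw (l - j)
      rwa [Nat.add_sub_cancel' h] at this
    · exact zero_mem _)
  have hzero : ∑ l ∈ Finset.range j, (if j ≤ l then U l (w (l - j)) else 0) = 0 :=
    Finset.sum_eq_zero fun l hl => if_neg (by simpa using hl)
  have hLj : L ∈ maximalIdeal R ^ j := by
    have := hL j
    rwa [hzero, sub_zero] at this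
  suffices z = L by rwa [this]
  rw [← sub_eq_zero]
  refine KF_separated hx fun n => ?_
  have h1 := hL (j + n)
  rw [Finset.sum_range_add, hzero, zero_add] at h1
  simp only [Nat.le_add_right, if_true, Nat.add_sub_cancel_left] at h1
  have h2 := hw n
  rw [← hw' n] at h2
  have h3 := KF_anti hx (show n ≤ c + (j + n) by omega) h2
  have h4 := KF_anti hx (show n ≤ j + n by omega) (pow_le_KF hx _ h1)
  have := sub_mem h3 h4
  rwa [sub_sub_sub_cancel_right] at this

end
end UnifBound

/-! ### Integral elements with bounded denominators -/

namespace UnifBound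

section length
variable {O M : Type*} [CommRing O] [AddCommGroup M] [Module O M]

/-- The length of `B / (A ⊓ B)`, as the image of `B` in `M / A`. -/
noncomputable def relLength (A B : Submodule O M) : ℕ∞ := Module.length O (B.map A.mkQ)

lemma relLength_add {A B C : Submodule O M} (hAB : A ≤ B) (hBC : B ≤ C) :
    relLength A C = relLength A B + relLength B C := by
  let g : (C.map A.mkQ) →ₗ[O] (C.map B.mkQ) := (Submodule.mapQ A B LinearMap.id hAB).restrict (by
    rintro _ ⟨c, hc, rfl⟩
    exact ⟨c, hc, rfl⟩)
  refine Module.length_eq_add_of_exact (Submodule.inclusion (Submodule.map_mono hBC)) g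
    (Submodule.inclusion_injective _) ?_ ?_
  · rintro ⟨_, c, hc, rfl⟩
    exact ⟨⟨A.mkQ c, c, hc, rfl⟩, rfl⟩
  · rintro ⟨_, c, hc, rfl⟩
    rw [← Subtype.coe_inj]
    change B.mkQ c = 0 ↔ _
    rw [Submodule.mkQ_apply, Submodule.Quotient.mk_eq_zero]
    constructor
    · intro h
      exact ⟨⟨A.mkQ c, c, h, rfl⟩, rfl⟩
    · rintro ⟨⟨_, b, hb, rfl⟩, h⟩
      have h1 : A.mkQ b = A.mkQ c := Subtype.ext_iff.1 h
      have h2 := hAB ((Submodule.Quotient.eq A).1 h1)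
      exact (Submodule.sub_mem_iff_right _ hb).1 h2

lemma relLength_map (e : M ≃ₗ[O] M) (A B : Submodule O M) :
    relLength (A.map e.toLinearMap) (B.map e.toLinearMap) = relLength A B := by
  let f := Submodule.Quotient.equiv A (A.map e.toLinearMap) e rfl
  have h := (f.submoduleMap (B.map A.mkQ)).length_eq
  have h2 : Submodule.map (A.map e.toLinearMap).mkQ (B.map e.toLinearMap) =
      (B.map A.mkQ).map f.toLinearMap := by
    rw [← Submodule.map_comp, ← Submodule.map_comp]
    rfl
  rw [relLength, relLength, h, h2]

lemma one_le_relLength {A B : Submodule O M} (h : A < B) : 1 ≤ relLength A B := by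
  rw [Order.one_le_iff_ne_zero, relLength, Ne, Module.length_eq_zero_iff]
  intro hs
  refine h.not_ge fun b hb => ?_
  have : A.mkQ b = 0 := by
    have h1 : (⟨A.mkQ b, b, hb, rfl⟩ : B.map A.mkQ) = ⟨0, zero_mem _⟩ := Subsingleton.elim _ _
    exact Subtype.ext_iff.1 h1
  rwa [Submodule.mkQ_apply, Submodule.Quotient.mk_eq_zero] at this

/-- The length of `B / e B` is the same for all modules that are commensurable
under powers of `e`. -/
lemma relLength_map_self (e : M ≃ₗ[O] M) (he : ∀ S : Submodule O M, S.map e.toLinearMap ≤ S)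
    (c : ℕ) (A B : Submodule O M) (hAB : A ≤ B)
    (h : B.map (e.toLinearMap ^ c) ≤ A) :
    relLength (B.map e.toLinearMap) B = relLength (A.map e.toLinearMap) A := by
  have key : ∀ A B : Submodule O M, A ≤ B → B.map e.toLinearMap ≤ A →
      relLength (B.map e.toLinearMap) B = relLength (A.map e.toLinearMap) A := by
    intro A B hAB h
    rw [relLength_add h hAB, relLength_add (Submodule.map_mono hAB) h, relLength_map, add_comm]
  induction c generalizing A with
  | zero =>
    have : A = B := le_antisymm hAB (by simpa [Module.End.one_eq_id] using h)
    rw [this]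
  | succ c ih =>
    have hc : ∀ c, B.map (e.toLinearMap ^ c) ≤ B := fun c => by
      induction c with
      | zero => simp [Module.End.one_eq_id]
      | succ c ih =>
        rw [pow_succ', Module.End.mul_eq_comp, Submodule.map_comp]
        exact (he _).trans ih
    rw [ih (A ⊔ B.map (e.toLinearMap ^ c)) (sup_le hAB (hc c)) le_sup_right]
    refine key _ _ le_sup_left ?_
    rw [Submodule.map_sup, ← Submodule.map_comp, ← Module.End.mul_eq_comp, ← pow_succ']
    exact sup_le (he _) h

end length

section chain
variable {O K : Type*} [CommRing O] [Field K] [Algebra O K]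

/-- If `O / π` has length at most `e`, products of integral elements `y` with `π ^ n * y ∈ O` have
denominator at most `π ^ (n * e)`, however long they are. With `Y` spanned by `1` and the `y`, and
`O'` the algebra they generate, `O' / π O'` has length at most `e` as well, so `O' = Y ^ e + π O'`;
iterating, `O' = Y ^ e`. -/
theorem exists_eq_pow_mul_prod [FaithfulSMul O K] {π : O} (hπ : π ≠ 0) {e : ℕ}
    (he : Module.length O (O ⧸ Ideal.span {π}) ≤ e) (n : ℕ) (l : List K)
    (hint : ∀ y ∈ l, IsIntegral O y)
    (hden : ∀ y ∈ l, ∃ r, algebraMap O K r = algebraMap O K π ^ n * y) :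
    ∃ r, algebraMap O K r = algebraMap O K π ^ (n * e) * l.prod := by
  classical
  set p : K := algebraMap O K π
  have hp : p ≠ 0 := fun h => hπ (FaithfulSMul.algebraMap_injective O K (by rw [map_zero]; exact h))
  let E : K ≃ₗ[O] K := LinearEquiv.ofBijective (LinearMap.mulLeft O p)
    ⟨fun a b h => mul_left_cancel₀ hp h, fun b => ⟨p⁻¹ * b, by simp [hp]⟩⟩
  have hE : ∀ z, E.toLinearMap z = p * z := fun _ => rfl
  have hEc : ∀ c z, (E.toLinearMap ^ c) z = p ^ c * z := fun c => by
    induction c with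
    | zero => simp
    | succ c ih => intro z; rw [pow_succ', Module.End.mul_apply, ih, hE, pow_succ', mul_assoc]
  have hEle : ∀ S : Submodule O K, S.map E.toLinearMap ≤ S := by
    rintro S _ ⟨z, hz, rfl⟩
    rw [hE, ← Algebra.smul_def]
    exact S.smul_mem _ hz
  set B := Algebra.adjoin O {y | y ∈ l}
  set O' : Submodule O K := Subalgebra.toSubmodule B
  have hmulO : ∀ a b, a ∈ O' → b ∈ O' → a * b ∈ O' := fun a b ha hb => B.mul_mem ha hb
  have hFG : O'.FG := fg_adjoin_of_finite l.finite_toSet hint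
  have hone : (1 : Submodule O K) ≤ O' := by
    rw [Submodule.one_eq_span, Submodule.span_singleton_le_iff_mem]
    exact B.one_mem
  -- a power of `π` clears all denominators of `O'`
  have hclear : ∃ c, O'.map (E.toLinearMap ^ c) ≤ 1 := by
    have h1 : ∀ z ∈ O', ∃ c, p ^ c * z ∈ (1 : Submodule O K) := by
      intro z hz
      refine Algebra.adjoin_induction (p := fun z _ => ∃ c, p ^ c * z ∈ (1 : Submodule O K))
        (fun y hy => ?_) (fun r => ⟨0, ?_⟩) ?_ ?_ hz
      · obtain ⟨r, hr⟩ := hden y hy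
        exact ⟨n, Submodule.mem_one.2 ⟨r, hr⟩⟩
      · exact Submodule.mem_one.2 ⟨r, by simp⟩
      · rintro y z - - ⟨c, hc⟩ ⟨d, hd⟩
        refine ⟨c + d, ?_⟩
        have : p ^ (c + d) * (y + z) = (π ^ d) • (p ^ c * y) + (π ^ c) • (p ^ d * z) := by
          rw [Algebra.smul_def, Algebra.smul_def, map_pow, map_pow]
          ring
        rw [this]
        exact add_mem (Submodule.smul_mem _ _ hc) (Submodule.smul_mem _ _ hd)
      · rintro y z - - ⟨c, hc⟩ ⟨d, hd⟩
        refine ⟨c + d, ?_⟩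
        have := Submodule.mul_mem_mul hc hd
        rw [one_mul] at this
        rwa [show p ^ (c + d) * (y * z) = p ^ c * y * (p ^ d * z) by ring]
    obtain ⟨s, hs⟩ := hFG
    have h2 : ∀ z : s, ∃ c, p ^ c * z.1 ∈ (1 : Submodule O K) := fun z =>
      h1 z.1 (hs ▸ Submodule.subset_span z.2)
    choose c hc using h2
    refine ⟨∑ z, c z, ?_⟩
    rw [← hs, Submodule.map_span_le]
    intro z hz
    rw [hEc]
    have hle : c ⟨z, hz⟩ ≤ ∑ z, c z := Finset.single_le_sum (f := c) (fun _ _ => Nat.zero_le _)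
      (Finset.mem_univ _)
    rw [← Nat.sub_add_cancel hle, pow_add, mul_assoc, ← map_pow, ← Algebra.smul_def]
    exact Submodule.smul_mem _ _ (hc ⟨z, hz⟩)
  obtain ⟨c, hc⟩ := hclear
  set P : Submodule O K := O'.map E.toLinearMap
  have hlen : relLength P O' ≤ e := by
    rw [relLength_map_self E hEle c 1 O' hone hc]
    refine le_trans ?_ he
    let f : O →ₗ[O] ((1 : Submodule O K).map (Submodule.mkQ ((1 : Submodule O K).map E.toLinearMap))) :=
      ((Submodule.mkQ _).comp (Algebra.linearMap O K)).codRestrict _ fun r =>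
        ⟨_, Submodule.mem_one.2 ⟨r, rfl⟩, rfl⟩
    have hf : Ideal.span {π} ≤ LinearMap.ker f := by
      rw [Ideal.span_singleton_le_iff_mem, LinearMap.mem_ker]
      refine Subtype.ext ?_
      change Submodule.mkQ _ p = 0
      rw [Submodule.mkQ_apply, Submodule.Quotient.mk_eq_zero]
      exact ⟨1, Submodule.one_le.1 le_rfl, by rw [hE, mul_one]⟩
    refine Module.length_le_of_surjective ((Ideal.span {π}).liftQ f hf) ?_
    rintro ⟨_, _, h, rfl⟩
    obtain ⟨r, rfl⟩ := Submodule.mem_one.1 h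
    exact ⟨Submodule.Quotient.mk r, rfl⟩
  set Y : Submodule O K := Submodule.span O (insert 1 {y | y ∈ l})
  have hY1 : (1 : K) ∈ Y := Submodule.subset_span (Set.mem_insert _ _)
  have hY1' : (1 : Submodule O K) ≤ Y := Submodule.one_le.2 hY1
  have hYl : ∀ y ∈ l, y ∈ Y := fun y hy => Submodule.subset_span (Set.mem_insert_of_mem _ hy)
  have hYO : Y ≤ O' := by
    refine Submodule.span_le.2 (Set.insert_subset B.one_mem Algebra.subset_adjoin)
  have hYpow : ∀ i, Y ^ i ≤ O' := fun i => by
    induction i with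
    | zero => rw [pow_zero]; exact hone
    | succ i ih =>
      rw [pow_succ]
      exact Submodule.mul_le.2 fun a ha b hb => hmulO a b (ih ha) (hYO hb)
  have hYP : Y * P ≤ P := by
    refine Submodule.mul_le.2 ?_
    rintro a ha _ ⟨b, hb, rfl⟩
    exact ⟨a * b, hmulO a b (hYO ha) hb, by rw [hE, hE]; ring⟩
  have hmono : ∀ i, Y ^ i ≤ Y ^ (i + 1) := fun i => by
    rw [pow_succ]
    exact le_mul_of_one_le_right' hY1'
  -- the chain `Y ^ i + π O'` stops after at most `e` steps
  obtain ⟨i, hi, hstab⟩ : ∃ i ≤ e, Y ^ (i + 1) ⊔ P ≤ Y ^ i ⊔ P := by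
    by_contra! hne
    have h1 : ∀ i ≤ e + 1, (i : ℕ∞) ≤ relLength P (Y ^ i ⊔ P) := by
      intro i hi
      induction i with
      | zero => simp
      | succ i ih =>
        have h2 : Y ^ i ⊔ P ≤ Y ^ (i + 1) ⊔ P := sup_le_sup_right (hmono i) _
        rw [relLength_add le_sup_right h2]
        push_cast
        exact add_le_add (ih (by omega)) (one_le_relLength (lt_of_le_not_ge h2 (hne i (by omega))))
    have h2 := h1 (e + 1) le_rfl
    have h3 : relLength P (Y ^ (e + 1) ⊔ P) ≤ relLength P O' := by
      rw [relLength_add le_sup_right (sup_le (hYpow _) (hEle _))]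
      exact le_self_add
    have h4 := (h2.trans h3).trans hlen
    norm_cast at h4
    omega
  -- where the chain stops, the term is stable under multiplication by `O'` and contains `1`
  have hD : ∀ a ∈ O', ∀ d ∈ Y ^ i ⊔ P, a * d ∈ Y ^ i ⊔ P := by
    intro a ha
    refine Algebra.adjoin_induction (p := fun a _ => ∀ d ∈ Y ^ i ⊔ P, a * d ∈ Y ^ i ⊔ P)
      (fun y hy d hd => ?_) (fun r d hd => ?_) ?_ ?_ ha
    · have h1 : Y * (Y ^ i ⊔ P) ≤ Y ^ i ⊔ P := by
        rw [Submodule.mul_sup, ← pow_succ']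
        exact (sup_le_sup_left hYP _).trans hstab
      exact h1 (Submodule.mul_mem_mul (hYl y hy) hd)
    · rw [← Algebra.smul_def]
      exact Submodule.smul_mem _ _ hd
    · intro a b _ _ h1 h2 d hd
      rw [add_mul]
      exact add_mem (h1 d hd) (h2 d hd)
    · intro a b _ _ h1 h2 d hd
      rw [mul_assoc]
      exact h1 _ (h2 d hd)
  have hone_pow : ∀ j, (1 : K) ∈ Y ^ j := fun j => by
    have := Submodule.pow_mem_pow Y hY1 j
    rwa [one_pow] at this
  have hO'le : O' ≤ Y ^ i ⊔ P := fun a ha => by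
    have := hD a ha 1 (Submodule.mem_sup_left (hone_pow i))
    rwa [mul_one] at this
  have hO'c : ∀ c, O' ≤ Y ^ i ⊔ O'.map (E.toLinearMap ^ c) := fun c => by
    induction c with
    | zero => simp [Module.End.one_eq_id]
    | succ c ih =>
      refine ih.trans (sup_le le_sup_left ?_)
      refine (Submodule.map_mono hO'le).trans ?_
      rw [Submodule.map_sup]
      refine sup_le_sup ?_ ?_
      · rintro _ ⟨z, hz, rfl⟩
        rw [hEc, ← map_pow, ← Algebra.smul_def]
        exact Submodule.smul_mem _ _ hz
      · rw [← Submodule.map_comp, ← Module.End.mul_eq_comp, ← pow_succ]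
  have hO'Y : O' ≤ Y ^ e := by
    have h1 : Y ^ i ≤ Y ^ e := pow_le_pow_right' hY1' hi
    refine ((hO'c c).trans (sup_le le_rfl (hc.trans ?_))).trans h1
    exact Submodule.one_le.2 (hone_pow i)
  have hprod : l.prod ∈ O' := B.list_prod_mem fun y hy => Algebra.subset_adjoin hy
  have hT : Submodule.span O {p ^ n} * Y ≤ 1 := by
    rw [Submodule.span_mul_span, Submodule.span_le]
    rintro _ ⟨_, rfl, y, hy, rfl⟩
    rcases hy with rfl | hy
    · exact Submodule.mem_one.2 ⟨π ^ n, by simp [p]⟩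
    · exact Submodule.mem_one.2 (hden y hy)
  have hfin : p ^ (n * e) * l.prod ∈ (Submodule.span O {p ^ n} * Y) ^ e := by
    rw [mul_pow, pow_mul]
    exact Submodule.mul_mem_mul (Submodule.pow_mem_pow _ (Submodule.mem_span_singleton_self _) e)
      (hO'Y hprod)
  have := pow_le_one' hT e hfin
  exact Submodule.mem_one.1 this

end chain
end UnifBound

/-! ### The ring of fractions with regular denominators -/

namespace UnifBound

open IsLocalRing MvPolynomial

/-- A finite `V`-algebra to which all nonunits of `V` map to zero is finite over the image of `V`, a
field. -/
lemma isArtinianRing_of_unit_or_zero {V Q : Type*} [CommRing V] [CommRing Q] [Algebra V Q]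
    [Module.Finite V Q] (h : ∀ v : V, algebraMap V Q v = 0 ∨ IsUnit v) : IsArtinianRing Q := by
  rcases subsingleton_or_nontrivial Q with hs | hn
  · infer_instance
  have hmax : (RingHom.ker (algebraMap V Q)).IsMaximal := by
    rw [Ideal.isMaximal_iff]
    refine ⟨by simp, fun J a hJ ha haJ => ?_⟩
    have := (h a).resolve_left ha
    rw [Ideal.eq_top_of_isUnit_mem _ haJ this]
    trivial
  let _ := Ideal.Quotient.field (RingHom.ker (algebraMap V Q))
  let _ : Algebra (V ⧸ RingHom.ker (algebraMap V Q)) Q := (RingHom.kerLift (algebraMap V Q)).toAlgebra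
  have : IsScalarTower V (V ⧸ RingHom.ker (algebraMap V Q)) Q :=
    IsScalarTower.of_algebraMap_eq fun _ => rfl
  have : Module.Finite (V ⧸ RingHom.ker (algebraMap V Q)) Q :=
    Module.Finite.of_restrictScalars_finite V _ Q
  exact IsArtinianRing.of_finite (V ⧸ RingHom.ker (algebraMap V Q)) Q

section
variable {R σ : Type*} [CommRing R] [IsLocalRing R] {x : σ → R}

/-- The subring of the fraction field consisting of the quotients `z / b` with `b` a regular form
of some degree `m` and `z ∈ J ^ m`. -/
def fracRing (x : σ → R) (J : Ideal R) (hJ : Ideal.span (Set.range x) ≤ J) :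
    Subring (FractionRing R) where
  carrier := {t | ∃ m b z, Reg x m b ∧ z ∈ J ^ m ∧
    t * algebraMap R (FractionRing R) b = algebraMap R (FractionRing R) z}
  zero_mem' := ⟨0, 1, 0, Reg.one, zero_mem _, by simp⟩
  one_mem' := ⟨0, 1, 1, Reg.one, by simp, by simp⟩
  mul_mem' := by
    rintro s t ⟨m, b, z, hb, hz, h⟩ ⟨m', b', z', hb', hz', h'⟩
    refine ⟨m + m', b * b', z * z', hb.mul hb', by rw [pow_add]; exact Ideal.mul_mem_mul hz hz', ?_⟩
    rw [map_mul, map_mul, ← h, ← h']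
    ring
  add_mem' := by
    rintro s t ⟨m, b, z, hb, hz, h⟩ ⟨m', b', z', hb', hz', h'⟩
    refine ⟨m + m', b * b', z * b' + b * z', hb.mul hb', ?_, ?_⟩
    · rw [pow_add]
      exact add_mem (Ideal.mul_mem_mul hz (Ideal.pow_right_mono hJ _ hb'.mem_span))
        (Ideal.mul_mem_mul (Ideal.pow_right_mono hJ _ hb.mem_span) hz')
    · rw [map_add, map_mul, map_mul, map_mul, ← h, ← h']
      ring
  neg_mem' := by
    rintro s ⟨m, b, z, hb, hz, h⟩
    exact ⟨m, b, -z, hb, neg_mem hz, by rw [map_neg, ← h]; ring⟩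

lemma algebraMap_mem_fracRing {J : Ideal R} {hJ : Ideal.span (Set.range x) ≤ J} (r : R) :
    algebraMap R (FractionRing R) r ∈ fracRing x J hJ :=
  ⟨0, 1, r, Reg.one, by simp, by simp⟩

lemma div_mem_fracRing [IsDomain R] (hx : Par x) {J : Ideal R} {hJ : Ideal.span (Set.range x) ≤ J} {m : ℕ} {b z : R}
    (hb : Reg x m b) (hz : z ∈ J ^ m) :
    algebraMap R (FractionRing R) z / algebraMap R (FractionRing R) b ∈ fracRing x J hJ :=
  ⟨m, b, z, hb, hz, div_mul_cancel₀ _ fun h => hb.ne_zero hx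
    (IsFractionRing.injective R (FractionRing R) (by rw [h, map_zero]))⟩

lemma fracRing_mono {J J' : Ideal R} (hJ : Ideal.span (Set.range x) ≤ J) (h : J ≤ J') :
    fracRing x J hJ ≤ fracRing x J' (hJ.trans h) := by
  rintro t ⟨m, b, z, hb, hz, ht⟩
  exact ⟨m, b, z, hb, Ideal.pow_right_mono h _ hz, ht⟩

lemma Par.span_le (hx : Par x) : Ideal.span (Set.range x) ≤ maximalIdeal R :=
  Ideal.span_le.2 (by rintro _ ⟨i, rfl⟩; exact hx.mem i)

/-- The ring `fracRing` for the maximal ideal. -/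
abbrev ORing (x : σ → R) (hx : Par x) : Subring (FractionRing R) :=
  fracRing x (maximalIdeal R) hx.span_le

/-- The parameter `x i` as an element of `ORing`. -/
def piO (hx : Par x) (i : σ) : ORing x hx :=
  ⟨algebraMap R (FractionRing R) (x i), algebraMap_mem_fracRing _⟩

/-- `ORing / x i` has finite length. By the reduction property `ORing` is finite over the ring `V` of
quotients of forms of equal degree, whose nonunits are multiples of `x i` in `ORing`. -/
theorem length_ORing_quotient_ne_top [IsDomain R] [IsNoetherianRing R] (hx : Par x) (i : σ) :
    Module.length (ORing x hx) (ORing x hx ⧸ Ideal.span {piO hx i}) ≠ ⊤ := by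
  classical
  set A := algebraMap R (FractionRing R) with hA
  have hAinj : Function.Injective A := IsFractionRing.injective R (FractionRing R)
  have hA0 : ∀ {b : R}, b ≠ 0 → A b ≠ 0 := fun hb h => hb (hAinj (by rw [h, map_zero]))
  set V := fracRing x (Ideal.span (Set.range x)) le_rfl with hV
  have hVO : V ≤ ORing x hx := fracRing_mono le_rfl hx.span_le
  set Q := ORing x hx ⧸ Ideal.span {piO hx i}
  let q : ORing x hx →+* Q := Ideal.Quotient.mk _
  have hq : Function.Surjective q := Ideal.Quotient.mk_surjective
  let _ : Algebra V (ORing x hx) := (Subring.inclusion hVO).toAlgebra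
  have hxi : x i ≠ 0 := (Reg.var i).ne_zero hx
  have hunit : ∀ v : V, algebraMap V Q v = 0 ∨ IsUnit v := by
    rintro ⟨v, m, b, a, hb, ha, hv⟩
    have hv' : v = A a / A b := (eq_div_iff (hA0 (hb.ne_zero hx))).2 hv
    rcases reg_or_mem hx ha with h | h
    · right
      refine IsUnit.of_mul_eq_one ⟨A b / A a, div_mem_fracRing hx h hb.mem_span⟩ ?_
      refine Subtype.ext ?_
      change v * (A b / A a) = 1
      rw [hv']
      have := hA0 (hb.ne_zero hx)
      have := hA0 (h.ne_zero hx)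
      field_simp
    · left
      refine Ideal.Quotient.eq_zero_iff_mem.2 (Ideal.mem_span_singleton.2 ?_)
      refine ⟨⟨A a / A (b * x i), div_mem_fracRing hx (hb.mul (Reg.var i)) h⟩, Subtype.ext ?_⟩
      change v = A (x i) * (A a / A (b * x i))
      rw [hv', map_mul]
      have := hA0 (hb.ne_zero hx)
      have := hA0 hxi
      field_simp
  obtain ⟨N, hN⟩ := hx.red
  obtain ⟨s, hs⟩ : (maximalIdeal R ^ N).FG := IsNoetherian.noetherian _
  have hmemN : ∀ y : s, y.1 ∈ maximalIdeal R ^ N := fun y => hs ▸ Ideal.subset_span y.2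
  let g : s → ORing x hx := fun y => ⟨A y / A (x i ^ N), by
    have := (Reg.var (x := x) i).pow N
    rw [one_mul] at this
    exact div_mem_fracRing hx this (hmemN y)⟩
  have : Module.Finite V (ORing x hx) := by
    refine ⟨⟨Finset.univ.image g, ?_⟩⟩
    rw [eq_top_iff]
    rintro ⟨t, m, b, z, hb, hz, ht⟩ -
    have h1 : z * x i ^ N ∈ Ideal.span (Set.range x) ^ m * maximalIdeal R ^ N := by
      refine pow_eq_of_red hN m ?_
      rw [add_comm, pow_add]
      exact Ideal.mul_mem_mul hz (Ideal.pow_mem_pow (hx.mem i) N)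
    have h2 : z * x i ^ N ∈ Ideal.span (Set.range x) ^ m • Ideal.span (Set.range fun y : s => y.1) := by
      have hrange : Set.range (fun y : s => y.1) = (s : Set R) := Subtype.range_coe
      rw [hrange, show Ideal.span (s : Set R) = maximalIdeal R ^ N from hs]
      exact h1
    obtain ⟨a, ha, haz⟩ := (Submodule.mem_ideal_smul_span_iff_exists_sum _ _ _).1 h2
    have hsum : (⟨t, m, b, z, hb, hz, ht⟩ : ORing x hx) =
        ∑ y : s, (⟨A (a y) / A b, div_mem_fracRing hx hb (ha y)⟩ : V) • g y := by
      refine Subtype.ext ?_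
      rw [AddSubmonoidClass.coe_finsetSum]
      have e : ∀ y : s, (((⟨A (a y) / A b, div_mem_fracRing hx hb (ha y)⟩ : V) • g y : ORing x hx) :
          FractionRing R) = A (a y * y) / (A b * A (x i ^ N)) := fun y => by
        rw [map_mul, ← div_mul_div_comm]
        rfl
      simp_rw [e]
      rw [← Finset.sum_div, ← map_sum]
      have hza : ∑ y : s, a y * y.1 = z * x i ^ N := by
        rw [← haz, Finsupp.sum_fintype _ _ (by simp)]
        rfl
      rw [hza, map_mul, mul_div_mul_right _ _ (hA0 (pow_ne_zero N hxi)), ← ht,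
        mul_div_cancel_right₀ _ (hA0 (hb.ne_zero hx))]
    rw [hsum]
    exact sum_mem fun y _ => Submodule.smul_mem _ _
      (Submodule.subset_span (by simp))
  have : Module.Finite V Q := by
    let ql : ORing x hx →ₗ[V] Q :=
      { q with map_smul' := fun v a => map_mul q (Subring.inclusion hVO v) a }
    exact Module.Finite.of_surjective ql hq
  have : IsArtinianRing Q := isArtinianRing_of_unit_or_zero hunit
  have h3 : Module.length (ORing x hx) Q = Module.length Q Q :=
    Module.length_eq_of_surjective hq
  rw [h3]
  exact Module.length_ne_top

end
end UnifBound

/-! ### Complete local domains -/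

namespace UnifBound

open IsLocalRing MvPolynomial

section
variable {R σ : Type*} [CommRing R] [IsLocalRing R] [IsDomain R] {x : σ → R}

/-- Divide the equation of integral dependence of degree `d` by `x i ^ (n * d)`. -/
lemma isIntegral_div (hx : Par x) (i : σ) {n : ℕ} {z : R}
    (hz : z ∈ idealIntegralClosure (maximalIdeal R ^ n)) :
    IsIntegral (ORing x hx)
      (algebraMap R (FractionRing R) z / algebraMap R (FractionRing R) (x i) ^ n) := by
  set A := algebraMap R (FractionRing R) with hA
  have hxi : A (x i) ≠ 0 := fun h => (Reg.var i).ne_zero hx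
    (IsFractionRing.injective R (FractionRing R) (by rw [h, map_zero]))
  obtain ⟨d, hd, a, ha, hza⟩ := hz
  have hα : ∀ k, ∃ α : ORing x hx, k ∈ Finset.Icc 1 d → (α : FractionRing R) = A (a k) / A (x i) ^ (n * k) := by
    intro k
    by_cases hk : k ∈ Finset.Icc 1 d
    · have h1 := ha k (Finset.mem_Icc.1 hk).1 (Finset.mem_Icc.1 hk).2
      rw [← pow_mul] at h1
      have h2 := (Reg.var (x := x) i).pow (n * k)
      rw [one_mul] at h2
      refine ⟨⟨A (a k) / A (x i ^ (n * k)), div_mem_fracRing hx h2 h1⟩, fun _ => ?_⟩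
      rw [← map_pow]
    · exact ⟨0, fun h => absurd h hk⟩
  choose α hα using hα
  refine ⟨Polynomial.X ^ d + ∑ k ∈ Finset.Icc 1 d, Polynomial.C (α k) * Polynomial.X ^ (d - k),
    Polynomial.monic_X_pow_add ?_, ?_⟩
  · refine (Polynomial.degree_sum_le _ _).trans_lt ?_
    rw [Finset.sup_lt_iff (by exact WithBot.bot_lt_coe d)]
    intro k hk
    refine (Polynomial.degree_C_mul_X_pow_le _ _).trans_lt ?_
    have := Finset.mem_Icc.1 hk
    exact_mod_cast (by omega : d - k < d)
  · rw [Polynomial.eval₂_add, Polynomial.eval₂_pow, Polynomial.eval₂_X, Polynomial.eval₂_finsetSum]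
    have h3 : A (z ^ d + ∑ k ∈ Finset.Icc 1 d, a k * z ^ (d - k)) / (A (x i) ^ n) ^ d = 0 := by
      rw [hza, map_zero, zero_div]
    rw [map_add, map_pow, map_sum, add_div, ← div_pow, Finset.sum_div] at h3
    rw [← h3]
    congr 1
    refine Finset.sum_congr rfl fun k hk => ?_
    rw [Polynomial.eval₂_mul, Polynomial.eval₂_C, Polynomial.eval₂_pow, Polynomial.eval₂_X]
    have h4 : (algebraMap (ORing x hx) (FractionRing R)) (α k) = A (a k) / A (x i) ^ (n * k) := hα k hk
    rw [h4, map_mul, map_pow, div_pow, div_mul_div_comm, pow_mul, ← pow_add,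
      Nat.add_sub_cancel' (Finset.mem_Icc.1 hk).2]

/-- Long products of elements integral over `M ^ n` lie in `KF n`, with length independent of
`n`. Among `e + 1` factors `x i ^ n`, `e` serve to clear the denominators, and the last one puts the
product into `KF n`. -/
theorem exists_prod_mem_KF [IsNoetherianRing R] [Nonempty σ] (hx : Par x) :
    ∃ e : ℕ, ∀ n, ∀ l : List R, e + 1 ≤ l.length →
      (∀ z ∈ l, z ∈ idealIntegralClosure (maximalIdeal R ^ n)) → l.prod ∈ KF x hx n := by
  obtain ⟨i⟩ := ‹Nonempty σ›
  set A := algebraMap R (FractionRing R) with hA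
  have hAinj : Function.Injective A := IsFractionRing.injective R (FractionRing R)
  have hxi : A (x i) ≠ 0 := fun h => (Reg.var i).ne_zero hx (hAinj (by rw [h, map_zero]))
  obtain ⟨e, he⟩ := ENat.ne_top_iff_exists.1 (length_ORing_quotient_ne_top hx i)
  refine ⟨e, fun n l hl hcl => ?_⟩
  have hπ : piO hx i ≠ 0 := fun h => hxi (congrArg Subtype.val h)
  obtain ⟨r, hr⟩ := exists_eq_pow_mul_prod (K := FractionRing R) hπ he.ge n
    (l.map fun z => A z / A (x i) ^ n)
    (by
      intro y hy
      obtain ⟨z, hz, rfl⟩ := List.mem_map.1 hy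
      exact isIntegral_div hx i (hcl z hz))
    (by
      intro y hy
      obtain ⟨z, hz, rfl⟩ := List.mem_map.1 hy
      refine ⟨⟨A z, algebraMap_mem_fracRing z⟩, ?_⟩
      change A z = A (x i) ^ n * (A z / A (x i) ^ n)
      rw [mul_div_cancel₀ _ (pow_ne_zero n hxi)])
  have hprod : ∀ l : List R, A l.prod =
      A (x i) ^ (n * l.length) * (l.map fun z => A z / A (x i) ^ n).prod := fun l => by
    induction l with
    | nil => simp
    | cons z l ih =>
      rw [List.prod_cons, map_mul, ih, List.map_cons, List.prod_cons, List.length_cons,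
        Nat.mul_succ, pow_add]
      field_simp
  obtain ⟨t, ht⟩ := Nat.exists_eq_add_of_le hl
  obtain ⟨m, b, w, hb, hw, hrb⟩ := r.2
  have h1 : A l.prod = A (x i) ^ (n * (1 + t)) * r.1 := by
    have h2 : r.1 = A (x i) ^ (n * e) * (l.map fun z => A z / A (x i) ^ n).prod := hr
    rw [hprod, h2, ht, ← mul_assoc, ← pow_add]
    congr 2
    ring
  have h3 : b * l.prod = x i ^ (n * t) * (x i ^ n * w) := by
    apply hAinj
    rw [map_mul, h1, map_mul, map_mul, map_pow, map_pow, ← hrb]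
    ring
  refine ⟨m, b, hb, ?_⟩
  rw [h3, pow_add]
  exact Ideal.mul_mem_left _ _ (Ideal.mul_mem_mul (Ideal.pow_mem_pow (hx.mem i) n) hw)

end

/-- The theorem for complete local domains with infinite residue field. Two products in `KF n`
multiply into `M ^ (2 * (n - c))`, which suffices for `n ≥ 2 * c`; smaller `n` are settled by long
products of elements of `M`. -/
theorem UB_of_isDomain (R : Type*) [CommRing R] [IsLocalRing R] [IsDomain R] [IsNoetherianRing R]
    [Infinite (ResidueField R)] (hR : SeriesComplete R) : UB R := by
  obtain ⟨s, hx⟩ := exists_par (R := R)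
  have hclM : ∀ n, 0 < n → ∀ z ∈ idealIntegralClosure (maximalIdeal R ^ n), z ∈ maximalIdeal R :=
    fun n hn z hz => closure_subset_prime (Ideal.pow_le_self hn.ne') hz
  -- with no parameters, the reduction property makes `M` nilpotent, so `R` is a field
  rcases isEmpty_or_nonempty s with hs | hs
  · have hbot : maximalIdeal R = ⊥ := by
      obtain ⟨N, hN⟩ := hx.red
      rw [Set.range_eq_empty, Ideal.span_empty, Ideal.bot_mul, le_bot_iff] at hN
      exact eq_bot_iff.2 fun z hz => by
        have := Ideal.pow_mem_pow hz (N + 1)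
        rw [hN] at this
        exact pow_eq_zero_iff (Nat.succ_ne_zero N) |>.1 this
    refine ⟨1, fun n hn l hl hcl => ?_⟩
    match l, hl with
    | z :: l, _ =>
      have := hclM n hn z (hcl z (by simp))
      rw [hbot, Ideal.mem_bot] at this
      simp [this]
  obtain ⟨e, he⟩ := exists_prod_mem_KF hx
  obtain ⟨c, hc⟩ := exists_KF_le hR hx
  refine ⟨2 * (e + 1) + 2 * c, fun n hn l hl hcl => ?_⟩
  rcases Nat.lt_or_ge n (2 * c) with hlt | hge
  · refine list_prod_mem_pow (k := 1) (S := (maximalIdeal R : Set R)) (fun l hl hz => ?_) n l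
      (by omega) fun z hz => hclM n hn z (hcl z hz)
    match l, hl with
    | z :: l, _ =>
      rw [List.prod_cons]
      exact Ideal.mul_mem_right _ _ (hz z (by simp))
  · have h1 := hc (n - c) (by
      rw [Nat.add_sub_cancel' (by omega)]
      exact he n (l.take (e + 1)) (by rw [List.length_take]; omega)
        fun z hz => hcl z (List.mem_of_mem_take hz))
    have h2 := hc (n - c) (by
      rw [Nat.add_sub_cancel' (by omega)]
      exact he n (l.drop (e + 1)) (by rw [List.length_drop]; omega)
        fun z hz => hcl z (List.mem_of_mem_drop hz))
    rw [← List.prod_take_mul_prod_drop l (e + 1)]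
    have := Ideal.mul_mem_mul h1 h2
    rw [← pow_add] at this
    exact Ideal.pow_le_pow_right (by omega) this

end UnifBound

/-- If `R` is a local ring with finitely generated maximal ideal `M`, then for each
`M`-primary ideal `I` of `R` there is `k > 0` such that
`(integral closure of I^n)^k ⊆ I^n` for every `n > 0`. -/
theorem uniform_bound_on_integral_closures {R : Type*} [CommRing R] [IsLocalRing R]
    (hfg : (IsLocalRing.maximalIdeal R).FG)
    (I : Ideal R) (hIpr : I.IsPrimary) (hIrad : I.radical = IsLocalRing.maximalIdeal R) :
    ∃ k : ℕ, 0 < k ∧ ∀ n : ℕ, 0 < n →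
      (Ideal.span (idealIntegralClosure (I ^ n))) ^ k ≤ I ^ n := by
  obtain ⟨S, _, _, hS, hinf, hcomp, hUB⟩ := UnifBound.exists_complete hfg
  have : IsNoetherianRing S := UnifBound.isNoetherianRing_of_complete hS
  refine UnifBound.main_of_UB hfg (hUB (UnifBound.UB_of_quotients fun P _ _ => ?_)) I hIrad
  have : Infinite (IsLocalRing.ResidueField (S ⧸ P)) :=
    have : IsLocalHom (Ideal.Quotient.mk P) :=
      IsLocalHom.of_surjective _ Ideal.Quotient.mk_surjective
    Infinite.of_injective _ (IsLocalRing.ResidueField.map (Ideal.Quotient.mk P)).injective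
  exact UnifBound.UB_of_isDomain _ ((UnifBound.seriesComplete_of_isAdicComplete).quotient P)
end

section
/- Let R be a local ring with finitely generated regular maximal ideal M. Then M is the radical of a principal ideal of R if and only if the M-adic completion R̂ of R is a one-dimensional Cohen–Macaulay ring (equivalently, a one-dimensional Noetherian local ring whose maximal ideal contains a nonzerodivisor). -/
open scoped nonZeroDivisors

/-!
Write `R̂` for the `M`-adic completion; since `M` is finitely generated, `R̂` is local and complete
for its maximal ideal `M R̂`, and the kernel of `R̂ → R / M ^ n` is `M ^ n R̂`.

If `M` is the radical of `(a)`, then `M ^ n ⊆ (a)` for some `n`, so a power of a nonzerodivisor of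
`M` is a multiple of `a` and `a` is a nonzerodivisor. It stays one in `R̂`
(`algebraMap_mem_nonZeroDivisors_adicCompletion`). As `M R̂` is the radical of `a R̂`, the ring
`R̂` is Noetherian by Cohen's theorem and completeness
(`isNoetherianRing_of_isAdicComplete_of_radical`), and Krull's principal ideal theorem gives
dimension one.

Conversely, a nonzerodivisor `x` in the maximal ideal of a one-dimensional Noetherian local `R̂`
generates an ideal whose radical is the maximal ideal. Replacing `x` by a sufficiently close
element `a` of `R` does not change the ideal it generates in `R̂`, and Nakayama's lemma in `R` then
shows that `(a)` contains a power of `M` (`exists_maximalIdeal_eq_radical_of_adicCompletion`).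
-/

lemma isPrecomplete_pi {S ι : Type*} [CommRing S] [Finite ι] (I : Ideal S) [IsPrecomplete I S] :
    IsPrecomplete I (ι → S) := by
  classical
  have := Fintype.ofFinite ι
  refine ⟨fun f hf ↦ ?_⟩
  have hlim (i : ι) : ∃ L : S, ∀ n, f n i ≡ L [SMOD (I ^ n • ⊤ : Submodule S S)] := by
    refine IsPrecomplete.prec' (fun n ↦ f n i) fun {m n} hmn ↦ ?_
    refine ((hf hmn).map (LinearMap.proj i)).mono ?_
    rw [Submodule.map_smul'']
    exact Submodule.smul_mono le_rfl le_top
  choose L hL using hlim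
  refine ⟨L, fun n ↦ ?_⟩
  rw [SModEq.sub_mem, pi_eq_sum_univ (f n - L)]
  refine Submodule.sum_mem _ fun i _ ↦ Submodule.smul_mem_smul ?_ trivial
  simpa [SModEq.sub_mem] using hL i n

open IsLocalRing in
/-- A local ring that is complete for its finitely generated maximal ideal is Noetherian as soon as
the maximal ideal is the radical of a principal ideal `(a)`. By Cohen's theorem it suffices that
every prime `P` is finitely generated; if `a ∉ P`, then `P ∩ (a) = aP`, so generators of `P` modulo
`(a)` generate `P` modulo `aP`, hence generate `P` by completeness. -/
lemma isNoetherianRing_of_isAdicComplete_of_radical {S : Type*} [CommRing S] [IsLocalRing S]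
    [IsAdicComplete (maximalIdeal S) S] (hfg : (maximalIdeal S).FG) {a : S}
    (ha : maximalIdeal S = (Ideal.span {a}).radical) : IsNoetherianRing S := by
  have prime_eq (P : Ideal S) [P.IsPrime] (haP : a ∈ P) : P = maximalIdeal S := by
    refine le_antisymm (le_maximalIdeal Ideal.IsPrime.ne_top') ?_
    rw [ha, Ideal.IsPrime.radical_le_iff ‹_›, Ideal.span_singleton_le_iff_mem]
    exact haP
  have ham : a ∈ maximalIdeal S := by
    rw [ha]; exact Ideal.le_radical (Ideal.mem_span_singleton_self a)
  -- The only prime of `S ⧸ (a)` is the image of the maximal ideal.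
  have hquot : IsNoetherianRing (S ⧸ Ideal.span {a}) := by
    refine IsNoetherianRing.of_prime fun Q hQ ↦ ?_
    have : (Q.comap (Ideal.Quotient.mk (Ideal.span {a}))).IsPrime := inferInstance
    have h := prime_eq (Q.comap (Ideal.Quotient.mk (Ideal.span {a}))) (by
      rw [Ideal.mem_comap, Ideal.Quotient.eq_zero_iff_mem.mpr (Ideal.mem_span_singleton_self a)]
      exact Q.zero_mem)
    rw [← Ideal.map_comap_of_surjective _ Ideal.Quotient.mk_surjective Q, h]
    exact hfg.map _
  refine IsNoetherianRing.of_prime fun P hP ↦ ?_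
  by_cases haP : a ∈ P
  · rwa [prime_eq P haP]
  have hPfg : (P.map (Ideal.Quotient.mk (Ideal.span {a}))).FG := IsNoetherian.noetherian _
  classical
  obtain ⟨s, hs⟩ := hPfg
  obtain ⟨t, htP, rfl⟩ : ∃ t : Finset S, (t : Set S) ⊆ P ∧
      t.image (Ideal.Quotient.mk (Ideal.span {a})) = s := by
    rw [← Finset.subset_set_image_iff]
    intro y hy
    exact (Ideal.mem_map_iff_of_surjective _ Ideal.Quotient.mk_surjective).mp
      (hs ▸ Ideal.subset_span hy)
  rw [Finset.coe_image, ← Ideal.map_span] at hs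
  have hdecomp (p : S) (hp : p ∈ P) : ∃ u ∈ Ideal.span (t : Set S), ∃ c ∈ P, u + c * a = p := by
    have h : p ∈ (Ideal.span (t : Set S)) ⊔ Ideal.span {a} := by
      have h' := Ideal.comap_map_of_surjective' (Ideal.Quotient.mk (Ideal.span {a}))
        Ideal.Quotient.mk_surjective (Ideal.span (t : Set S))
      rw [Ideal.mk_ker] at h'
      rw [← h', Ideal.mem_comap, hs]
      exact Ideal.mem_map_of_mem _ hp
    obtain ⟨u, hu, v, hv, rfl⟩ := Submodule.mem_sup.mp h
    obtain ⟨c, rfl⟩ := Ideal.mem_span_singleton'.mp hv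
    refine ⟨u, hu, c, ?_, rfl⟩
    have hca : c * a ∈ P := (P.add_mem_iff_right (Ideal.span_le.mpr htP hu)).mp hp
    exact (hP.mem_or_mem hca).resolve_right haP
  let f : (t → S) →ₗ[S] P := Fintype.linearCombination S fun i : t ↦ (⟨i, htP i.2⟩ : P)
  have hrange : (LinearMap.range f).map P.subtype = Ideal.span (t : Set S) := by
    rw [Fintype.range_linearCombination, Submodule.map_span, ← Set.range_comp]
    congr 1
    ext y
    simp
  have : IsPrecomplete (maximalIdeal S) (t → S) := isPrecomplete_pi _
  have : IsHausdorff (maximalIdeal S) P := by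
    refine ⟨fun x hx ↦ Subtype.ext (IsHausdorff.haus (I := maximalIdeal S) (M := S)
      inferInstance x fun n ↦ ?_)⟩
    have := (hx n).map P.subtype
    refine this.mono ?_
    rw [Submodule.map_smul'']
    exact Submodule.smul_mono le_rfl le_top
  have hf : Function.Surjective f := by
    refine surjective_of_mkQ_comp_surjective (I := maximalIdeal S) fun y ↦ ?_
    obtain ⟨⟨p, hp⟩, rfl⟩ := Submodule.mkQ_surjective _ y
    obtain ⟨u, hu, c, hc, rfl⟩ := hdecomp p hp
    rw [← hrange] at hu
    obtain ⟨_, ⟨g, rfl⟩, hg⟩ := hu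
    refine ⟨g, ?_⟩
    rw [LinearMap.comp_apply, ← sub_eq_zero, ← map_sub, Submodule.mkQ_apply,
      Submodule.Quotient.mk_eq_zero]
    have : f g - ⟨u + c * a, hp⟩ = a • (-⟨c, hc⟩ : P) := by
      refine Subtype.ext ?_
      change (f g : S) - (u + c * a) = a * -c
      rw [← hg]
      change (f g : S) - ((f g : S) + c * a) = a * -c
      ring
    rw [this]
    exact Submodule.smul_mem_smul ham trivial
  exact Module.Finite.iff_fg.mp (Module.Finite.of_surjective f hf)

/-- If `M ^ n ⊆ (a)` and `a` is a nonzerodivisor, then `a r ∈ M ^ (k + n)` forces `r ∈ M ^ k`, so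
`a` remains a nonzerodivisor in the `M`-adic completion. -/
lemma algebraMap_mem_nonZeroDivisors_adicCompletion {R : Type*} [CommRing R] {M : Ideal R} {a : R}
    (ha : a ∈ R⁰) {n : ℕ} (hn : M ^ n ≤ Ideal.span {a}) :
    algebraMap R (AdicCompletion M R) a ∈ (AdicCompletion M R)⁰ := by
  rw [mem_nonZeroDivisors_iff_left]
  intro x hx
  obtain ⟨f, rfl⟩ := AdicCompletion.mk_surjective M R x
  refine AdicCompletion.ext_evalₐ fun k ↦ ?_
  have h : a * f (k + n) ∈ M ^ (k + n) := by
    have := congrArg (AdicCompletion.evalₐ M (k + n)) hx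
    rw [map_mul, AlgHom.commutes, AdicCompletion.evalₐ_mk, map_zero,
      Ideal.Quotient.algebraMap_eq, ← map_mul, Ideal.Quotient.eq_zero_iff_mem] at this
    exact this
  have h2 : a * f (k + n) ∈ M ^ k * Ideal.span {a} := by
    rw [pow_add] at h
    exact Ideal.mul_mono_right hn h
  obtain ⟨s, hs, hsa⟩ := Ideal.mem_mul_span_singleton.mp h2
  have hfs : s = f (k + n) := by
    rw [mul_comm] at hsa
    exact (mul_cancel_left_mem_nonZeroDivisors ha).mp hsa
  rw [AdicCompletion.evalₐ_mk, map_zero,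
    AdicCompletion.Ideal.mk_eq_mk (I := M) (Nat.le_add_right k n) f |>.symm,
    Ideal.Quotient.eq_zero_iff_mem, ← hfs]
  exact hs

open IsLocalRing in
/-- In a one-dimensional Noetherian local ring, a nonzerodivisor in the maximal ideal lies in no
other prime, because the ideal it generates already has height one. -/
lemma maximalIdeal_eq_radical_of_ringKrullDim_eq_one {S : Type*} [CommRing S] [IsLocalRing S]
    [IsNoetherianRing S] (hdim : ringKrullDim S = 1) {x : S} (hxm : x ∈ maximalIdeal S)
    (hx : x ∈ S⁰) : maximalIdeal S = (Ideal.span {x}).radical := by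
  have hheight : (maximalIdeal S).height = 1 := by
    have := (maximalIdeal_height_eq_ringKrullDim (R := S)).trans hdim
    exact_mod_cast this
  have h1 : (Ideal.span {x}).height = 1 :=
    Ideal.height_span_singleton_eq_one_of_mem_nonZeroDivisors hx ((mem_maximalIdeal x).mp hxm)
  refine le_antisymm ?_ ?_
  · rw [Ideal.radical_eq_sInf]
    refine le_sInf fun P ⟨hxP, hP⟩ ↦ ?_
    by_contra hlt
    have hlt : P < maximalIdeal S :=
      lt_of_le_of_ne (le_maximalIdeal hP.ne_top) fun h ↦ hlt h.ge
    have h2 : P.height < (maximalIdeal S).height := by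
      have := hP
      exact Ideal.height_strict_mono_of_isPrime_of_isPrime hlt
    have h3 := Ideal.height_mono hxP
    rw [hheight] at h2
    rw [h1] at h3
    exact absurd h2 h3.not_gt
  · rw [(maximalIdeal.isMaximal S).isPrime.radical_le_iff, Ideal.span_singleton_le_iff_mem]
    exact hxm

open IsLocalRing in
lemma ringKrullDim_eq_one_of_maximalIdeal_eq_radical {S : Type*} [CommRing S] [IsLocalRing S]
    [IsNoetherianRing S] {x : S} (hx : x ∈ S⁰) (hm : maximalIdeal S = (Ideal.span {x}).radical) :
    ringKrullDim S = 1 := by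
  have hxm : x ∈ maximalIdeal S := by
    rw [hm]; exact Ideal.le_radical (Ideal.mem_span_singleton_self x)
  have h1 : (Ideal.span {x}).height = 1 :=
    Ideal.height_span_singleton_eq_one_of_mem_nonZeroDivisors hx ((mem_maximalIdeal x).mp hxm)
  have hmin : maximalIdeal S ∈ (Ideal.span {x}).minimalPrimes := by
    rw [← Ideal.radical_minimalPrimes, ← hm, Ideal.minimalPrimes_eq_subsingleton_self]
    rfl
  replace h1 : (maximalIdeal S).height = 1 :=
    le_antisymm (Ideal.height_le_one_of_isPrincipal_of_mem_minimalPrimes _ _ hmin)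
      (h1 ▸ Ideal.height_mono hmin.1.2)
  rw [← maximalIdeal_height_eq_ringKrullDim, h1]
  rfl

/-- For finitely generated `M`, the kernel of `R̂ → R / M ^ n` is contained in `M ^ n R̂`. -/
lemma mem_map_pow_of_evalₐ_eq_zero {R : Type*} [CommRing R] {M : Ideal R} (hfg : M.FG) {n : ℕ}
    {x : AdicCompletion M R} (hx : AdicCompletion.evalₐ M n x = 0) :
    x ∈ M.map (algebraMap R (AdicCompletion M R)) ^ n := by
  have h : x ∈ (AdicCompletion.eval M R n).ker := by
    rw [LinearMap.mem_ker]
    have := AdicCompletion.factor_evalₐ_eq_eval (I := M) (n := n) x (by simp)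
    exact this.symm.trans (by rw [hx, map_zero])
  rw [← AdicCompletion.pow_smul_top_eq_ker_eval hfg, Ideal.smul_top_eq_map,
    Submodule.restrictScalars_mem, Ideal.map_pow] at h
  exact h

open IsLocalRing in
/-- Descent of a generator up to radical. Approximating `x` by `a ∈ R` modulo `M ^ (n + 1)`, where
`M ^ n R̂ ⊆ x R̂`, changes `x` only by a unit of `R̂`; hence `M ^ n ⊆ a R + M ^ (n + 1)`, and
Nakayama's lemma gives `M ^ n ⊆ a R`. -/
lemma exists_maximalIdeal_eq_radical_of_adicCompletion {R : Type*} [CommRing R] [IsLocalRing R]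
    (hfg : (maximalIdeal R).FG) [IsLocalRing (AdicCompletion (maximalIdeal R) R)]
    {x : AdicCompletion (maximalIdeal R) R}
    (hx : maximalIdeal (AdicCompletion (maximalIdeal R) R) = (Ideal.span {x}).radical) :
    ∃ a : R, maximalIdeal R = (Ideal.span {a}).radical := by
  have hmap := AdicCompletion.maximalIdeal_eq_map_of_fg hfg
  obtain ⟨n, hn⟩ : ∃ n, maximalIdeal (AdicCompletion (maximalIdeal R) R) ^ n ≤ Ideal.span {x} := by
    have := Ideal.exists_radical_pow_le_of_fg (Ideal.span {x})
      (by rw [← hx, hmap]; exact hfg.map _)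
    rwa [← hx] at this
  obtain ⟨f, hf⟩ := AdicCompletion.mk_surjective (maximalIdeal R) R x
  set a : R := f (n + 1)
  have hxa : x - algebraMap R _ a ∈ maximalIdeal (AdicCompletion (maximalIdeal R) R) * Ideal.span {x} := by
    have : x - algebraMap R _ a ∈ maximalIdeal (AdicCompletion (maximalIdeal R) R) ^ (n + 1) := by
      rw [hmap]
      refine mem_map_pow_of_evalₐ_eq_zero hfg ?_
      rw [map_sub, ← hf, AlgHom.commutes, AdicCompletion.evalₐ_mk, Ideal.Quotient.algebraMap_eq,
        sub_self]
    rw [pow_succ'] at this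
    exact Ideal.mul_mono_right hn this
  obtain ⟨y, hy, hyx⟩ := Ideal.mem_mul_span_singleton.mp hxa
  have hunit : IsUnit (1 - y) := by
    by_contra h
    have h1 : (1 - y) + y ∈ maximalIdeal (AdicCompletion (maximalIdeal R) R) :=
      add_mem ((mem_maximalIdeal _).mpr h) hy
    rw [sub_add_cancel] at h1
    exact (Ideal.ne_top_iff_one _).mp Ideal.IsPrime.ne_top' h1
  have hax : algebraMap R _ a = (1 - y) * x := by
    linear_combination hyx
  have hspan : Ideal.span {algebraMap R (AdicCompletion (maximalIdeal R) R) a} = Ideal.span {x} := by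
    rw [hax]; exact Ideal.span_singleton_mul_left_unit hunit x
  have ham : a ∈ maximalIdeal R := by
    by_contra h
    have hu : IsUnit (algebraMap R (AdicCompletion (maximalIdeal R) R) a) :=
      (notMem_maximalIdeal.mp h).map _
    have : algebraMap R (AdicCompletion (maximalIdeal R) R) a ∈ maximalIdeal (AdicCompletion (maximalIdeal R) R) := by
      rw [hx, ← hspan]; exact Ideal.le_radical (Ideal.mem_span_singleton_self _)
    exact (mem_maximalIdeal _).mp this hu
  have hle : maximalIdeal R ^ n ≤ Ideal.span {a} ⊔ maximalIdeal R • maximalIdeal R ^ n := by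
    intro z hz
    have hz' : algebraMap R (AdicCompletion (maximalIdeal R) R) z ∈
        Ideal.span {algebraMap R (AdicCompletion (maximalIdeal R) R) a} := by
      rw [hspan]
      refine hn ?_
      rw [hmap, ← Ideal.map_pow]
      exact Ideal.mem_map_of_mem _ hz
    obtain ⟨w, hw⟩ := Ideal.mem_span_singleton'.mp hz'
    obtain ⟨g, rfl⟩ := AdicCompletion.mk_surjective (maximalIdeal R) R w
    have h := congrArg (AdicCompletion.evalₐ (maximalIdeal R) (n + 1)) hw
    rw [map_mul, AlgHom.commutes, AlgHom.commutes, AdicCompletion.evalₐ_mk,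
      Ideal.Quotient.algebraMap_eq, ← map_mul, eq_comm, Ideal.Quotient.eq, pow_succ'] at h
    rw [← add_sub_cancel (g (n + 1) * a) z]
    exact add_mem (Submodule.mem_sup_left (Ideal.mul_mem_left _ _
      (Ideal.mem_span_singleton_self a))) (Submodule.mem_sup_right h)
  have hpow : maximalIdeal R ^ n ≤ Ideal.span {a} :=
    Submodule.le_of_le_smul_of_le_jacobson_bot (hfg.pow) (maximalIdeal_le_jacobson _) hle
  refine ⟨a, le_antisymm (fun z hz ↦ ⟨n, hpow (Ideal.pow_mem_pow hz n)⟩) ?_⟩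
  rw [(maximalIdeal.isMaximal R).isPrime.radical_le_iff, Ideal.span_singleton_le_iff_mem]
  exact ham

/-- Let `R` be a local ring with finitely generated regular maximal ideal `M`.  Then `M` is
the radical of a principal ideal of `R` iff the `M`-adic completion `R̂` of `R` is a
one-dimensional Cohen–Macaulay ring, i.e. a one-dimensional Noetherian local ring whose
maximal ideal contains a nonzerodivisor. -/
theorem radical_principal_iff_completion_CM {R : Type*} [CommRing R] [IsLocalRing R]
    (hfg : (IsLocalRing.maximalIdeal R).FG)
    (hreg : ∃ r ∈ IsLocalRing.maximalIdeal R, r ∈ R⁰) :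
    (∃ a : R, IsLocalRing.maximalIdeal R = (Ideal.span {a}).radical) ↔
      (∃ h : IsLocalRing (AdicCompletion (IsLocalRing.maximalIdeal R) R),
        IsNoetherianRing (AdicCompletion (IsLocalRing.maximalIdeal R) R) ∧
        ringKrullDim (AdicCompletion (IsLocalRing.maximalIdeal R) R) = 1 ∧
        ∃ x ∈ @IsLocalRing.maximalIdeal (AdicCompletion (IsLocalRing.maximalIdeal R) R) _ h,
          x ∈ (AdicCompletion (IsLocalRing.maximalIdeal R) R)⁰) := by
  constructor
  · rintro ⟨a, ha⟩
    have hloc := AdicCompletion.isLocalRing_of_fg hfg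
    have hmap := AdicCompletion.maximalIdeal_eq_map_of_fg hfg
    have hcomp := AdicCompletion.isAdicComplete_of_fg hfg
    obtain ⟨n, hn⟩ : ∃ n, IsLocalRing.maximalIdeal R ^ n ≤ Ideal.span {a} := by
      have := Ideal.exists_radical_pow_le_of_fg (Ideal.span {a}) (by rwa [← ha])
      rwa [← ha] at this
    -- A power of the given nonzerodivisor of `M` is a multiple of `a`.
    have ha0 : a ∈ R⁰ := by
      obtain ⟨r, hrM, hr⟩ := hreg
      obtain ⟨b, hb⟩ := Ideal.mem_span_singleton'.mp (hn (Ideal.pow_mem_pow hrM n))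
      have : b * a ∈ R⁰ := hb ▸ pow_mem hr n
      exact (mul_mem_nonZeroDivisors.mp this).2
    have hx := algebraMap_mem_nonZeroDivisors_adicCompletion ha0 hn
    have ham : a ∈ IsLocalRing.maximalIdeal R := by
      rw [ha]; exact Ideal.le_radical (Ideal.mem_span_singleton_self a)
    have hxm : algebraMap R _ a ∈
        IsLocalRing.maximalIdeal (AdicCompletion (IsLocalRing.maximalIdeal R) R) := by
      rw [hmap]; exact Ideal.mem_map_of_mem _ ham
    have hrad : IsLocalRing.maximalIdeal (AdicCompletion (IsLocalRing.maximalIdeal R) R) =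
        (Ideal.span {algebraMap R _ a}).radical := by
      refine le_antisymm ?_ ?_
      · rw [hmap, Ideal.map_le_iff_le_comap]
        intro z hz
        refine ⟨n, ?_⟩
        rw [← map_pow, ← Set.image_singleton, ← Ideal.map_span]
        exact Ideal.mem_map_of_mem _ (hn (Ideal.pow_mem_pow hz n))
      · rw [(IsLocalRing.maximalIdeal.isMaximal _).isPrime.radical_le_iff,
          Ideal.span_singleton_le_iff_mem]
        exact hxm
    have hnoeth := isNoetherianRing_of_isAdicComplete_of_radical (hmap ▸ hfg.map _) hrad
    exact ⟨hloc, hnoeth, ringKrullDim_eq_one_of_maximalIdeal_eq_radical hx hrad, _, hxm, hx⟩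
  · rintro ⟨hloc, hnoeth, hdim, x, hxm, hx⟩
    exact exists_maximalIdeal_eq_radical_of_adicCompletion hfg
      (maximalIdeal_eq_radical_of_ringKrullDim_eq_one hdim hxm hx)
end
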